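/- Let c = 2π√(5/12). As the positive integer n → ∞, π(n,n) ~ (5/(2^5·3)) · e^{c√n}/n^{3/2}; that is, the ratio π(n,n) / [ (5/96) · e^{c√n}/n^{3/2} ] tends to 1. -/

import Mathlib

open Finset

/-- A pair of sequences of parts is *steadily decreasing* if
`min (a i) (b i) ≥ max (a (i+1)) (b (i+1))` for all `i`. -/
noncomputable def SteadilyDecreasing (a b : ℕ → ℕ) : Prop :=
  ∀ i, max (a (i + 1)) (b (i + 1)) ≤ min (a i) (b i)

/-- `bipartitePi m n` is the number of pairs of partitions (given as non-increasing,
finitely supported sequences) of the bipartite number `(m, n)` with steadily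
decreasing parts. -/
noncomputable def bipartitePi (m n : ℕ) : ℕ :=
  Nat.card {p : (ℕ →₀ ℕ) × (ℕ →₀ ℕ) //
    (∀ i, p.1 (i + 1) ≤ p.1 i) ∧ (∀ i, p.2 (i + 1) ≤ p.2 i) ∧
    SteadilyDecreasing p.1 p.2 ∧
    (p.1.sum fun _ x => x) = m ∧ (p.2.sum fun _ x => x) = n}

/-- The partition function `p n`. -/
noncomputable def partitionCount (n : ℕ) : ℕ := Nat.card (Nat.Partition n)

/-- The partition function extended to the integers, with `p r = 0` for `r < 0`. -/
noncomputable def partitionCountInt (r : ℤ) : ℕ := if 0 ≤ r then partitionCount r.toNat else 0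

/-- The cubic partition function `c n`, counting partitions of `n` in which even
parts come in two colors (equivalently, pairs of a partition together with a
partition into even parts, of total size `n`). -/
noncomputable def cubicPartition (n : ℕ) : ℕ :=
  Nat.card {p : Multiset ℕ × Multiset ℕ //
    (∀ i ∈ p.1, 0 < i) ∧ (∀ i ∈ p.2, 0 < i ∧ Even i) ∧ p.1.sum + p.2.sum = n}

/-- The Andrews–Garvan crank of a partition: the largest part if there are no ones,
and otherwise the number of parts larger than the number of ones minus the number of
ones. -/
noncomputable def crank {n : ℕ} (l : n.Partition) : ℤ :=
  if l.parts.count 1 = 0 then (l.parts.sup : ℤ)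
  else ((l.parts.filter fun p => l.parts.count 1 < p).card : ℤ) - l.parts.count 1

/-- `crankM m n` is the crank counting function `M(m, n)`: the number of partitions
of `n` with crank `m`, with the standard convention at `n = 1`
(`M(0,1) = -1`, `M(±1,1) = 1`, `M(m,1) = 0` otherwise). -/
noncomputable def crankM (m : ℤ) (n : ℕ) : ℤ :=
  if n = 1 then (if m = 0 then -1 else if m.natAbs = 1 then 1 else 0)
  else (Nat.card {l : n.Partition // crank l = m} : ℤ)

/-- `alphaBip s k = Σ_{ℓ ≥ 0} (-1)^ℓ p(k - ℓ(ℓ+1)/2 - ℓ s)`. -/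
noncomputable def alphaBip (s k : ℕ) : ℤ :=
  ∑' ℓ : ℕ, (-1 : ℤ) ^ ℓ *
    (partitionCountInt ((k : ℤ) - ℓ * (ℓ + 1) / 2 - ℓ * s) : ℤ)

/-- `Dbip m n = π(m,n) - π(m-1,n)`, with `π(-1,n) := 0`. -/
noncomputable def Dbip (m n : ℕ) : ℤ :=
  (bipartitePi m n : ℤ) - if m = 0 then 0 else (bipartitePi (m - 1) n : ℤ)

section
open Finset
open Filter Topology

/-- Euler product. -/
noncomputable def Eu (q : ℂ) : ℂ := ∏' n : ℕ, (1 - q ^ (n + 1))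
/-- finite q-Pochhammer. -/
noncomputable def qp (q : ℂ) (k : ℕ) : ℂ := ∏ i ∈ range k, (1 - q ^ (i + 1))
/-- Euler's first series. -/
noncomputable def f1 (q z : ℂ) : ℂ := ∑' k : ℕ, z ^ k / qp q k
/-- Euler's second series. -/
noncomputable def f2 (q z : ℂ) : ℂ := ∑' k : ℕ, (-1) ^ k * q ^ (k.choose 2) * z ^ k / qp q k
/-- The false theta series. -/
noncomputable def Th (q : ℂ) : ℂ := ∑' k : ℕ, (-1) ^ k * q ^ ((k + 1).choose 2)

lemma one_sub_pow_ne {q : ℂ} (hq : ‖q‖ < 1) (n : ℕ) : 1 - q ^ (n + 1) ≠ 0 := by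
  intro h
  have : ‖q ^ (n+1)‖ = 1 := by rw [← sub_eq_zero.mp h]; simp
  rw [norm_pow] at this
  exact absurd this (pow_lt_one₀ (norm_nonneg _) hq (by omega)).ne

lemma qp_ne {q : ℂ} (hq : ‖q‖ < 1) (k : ℕ) : qp q k ≠ 0 :=
  Finset.prod_ne_zero_iff.mpr fun i _ => one_sub_pow_ne hq i

lemma qp_succ (q : ℂ) (k : ℕ) : qp q (k+1) = qp q k * (1 - q ^ (k+1)) := by
  simp [qp, Finset.prod_range_succ]

lemma qp_tendsto {q : ℂ} (hq : ‖q‖ < 1) : Tendsto (qp q) atTop (𝓝 (Eu q)) :=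
  (ModularForm.multipliable_one_sub_pow hq).hasProd.tendsto_prod_nat

lemma Eu_ne {q : ℂ} (hq : ‖q‖ < 1) : Eu q ≠ 0 := by
  unfold Eu
  have := tprod_one_add_ne_zero_of_summable (f := fun n : ℕ => -q ^ (n+1)) (fun i => by
    simpa [← sub_eq_add_neg] using one_sub_pow_ne hq i) (by
    simpa using (summable_nat_add_iff 1).mpr (summable_geometric_of_lt_one (norm_nonneg _) hq))
  simpa [← sub_eq_add_neg] using this

lemma qp_inv_bdd {q : ℂ} (hq : ‖q‖ < 1) : ∃ C : ℝ, 0 ≤ C ∧ ∀ k, ‖(qp q k)⁻¹‖ ≤ C := by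
  have h := (qp_tendsto hq).inv₀ (Eu_ne hq)
  obtain ⟨C, hC⟩ := (Metric.isBounded_range_of_tendsto _ h).exists_norm_le
  exact ⟨C, (norm_nonneg _).trans (hC _ ⟨0, rfl⟩), fun k => hC _ ⟨k, rfl⟩⟩

lemma f1_summable {q z : ℂ} (hq : ‖q‖ < 1) (hz : ‖z‖ < 1) :
    Summable fun k : ℕ => ‖z ^ k / qp q k‖ := by
  obtain ⟨C, hC0, hC⟩ := qp_inv_bdd hq
  refine Summable.of_nonneg_of_le (fun _ => norm_nonneg _) (fun k => ?_)
    ((summable_geometric_of_lt_one (norm_nonneg _) hz).mul_right C)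
  rw [div_eq_mul_inv, norm_mul, norm_pow]
  gcongr
  exact hC k

lemma f2_summable {q z : ℂ} (hq : ‖q‖ < 1) (hz : ‖z‖ < 1) :
    Summable fun k : ℕ => ‖(-1) ^ k * q ^ (k.choose 2) * z ^ k / qp q k‖ := by
  refine Summable.of_nonneg_of_le (fun _ => norm_nonneg _) (fun k => ?_) (f1_summable hq hz)
  rw [mul_div_assoc, norm_mul]
  have : ‖(-1) ^ k * q ^ (k.choose 2)‖ ≤ 1 := by
    simp only [norm_mul, norm_pow, norm_neg, norm_one, one_pow, one_mul]
    exact pow_le_one₀ (norm_nonneg _) hq.le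
  exact mul_le_of_le_one_left (norm_nonneg _) this

lemma f1_rec {q z : ℂ} (hq : ‖q‖ < 1) (hz : ‖z‖ < 1) : f1 q z * (1 - z) = f1 q (q * z) := by
  have hqz : ‖q * z‖ < 1 := by
    rw [norm_mul]; exact mul_lt_one_of_nonneg_of_lt_one_left (norm_nonneg _) hq hz.le
  have s1 := (f1_summable hq hz).of_norm
  have s2 := (f1_summable hq hqz).of_norm
  have : f1 q z - f1 q (q*z) = z * f1 q z := by
    unfold f1
    rw [← s1.tsum_sub s2, (s1.sub s2).tsum_eq_zero_add, ← tsum_mul_left]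
    simp only [pow_zero, sub_self, zero_add]
    congr 1; ext k
    have h1 := qp_ne hq k
    have h2 := one_sub_pow_ne hq k
    rw [qp_succ]
    field_simp
    ring
  linear_combination this

lemma f2_rec {q z : ℂ} (hq : ‖q‖ < 1) (hz : ‖z‖ < 1) : f2 q z = (1 - z) * f2 q (q * z) := by
  have hqz : ‖q * z‖ < 1 := by
    rw [norm_mul]; exact mul_lt_one_of_nonneg_of_lt_one_left (norm_nonneg _) hq hz.le
  have s1 := (f2_summable hq hz).of_norm
  have s2 := (f2_summable hq hqz).of_norm
  have : f2 q z - f2 q (q*z) = -z * f2 q (q*z) := by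
    unfold f2
    rw [← s1.tsum_sub s2, (s1.sub s2).tsum_eq_zero_add, ← tsum_mul_left]
    simp only [pow_zero, sub_self, zero_add]
    congr 1; ext k
    have h1 := qp_ne hq k
    have h2 := one_sub_pow_ne hq k
    rw [qp_succ, show (k+1).choose 2 = k + k.choose 2 by rw [Nat.choose_succ_succ' k 1]; simp]
    field_simp
    ring
  linear_combination this

lemma series_tendsto_one (a : ℕ → ℂ) (ha : a 0 = 1) (C : ℝ) (hC : ∀ k, ‖a k‖ ≤ C) {q z : ℂ}
    (hq : ‖q‖ < 1) (hz : ‖z‖ < 1) :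
    Tendsto (fun N : ℕ => ∑' k : ℕ, a k * (q ^ N * z) ^ k) atTop (𝓝 1) := by
  have : (1:ℂ) = ∑' k : ℕ, if k = 0 then 1 else 0 := by simp
  rw [this]
  refine tendsto_tsum_of_dominated_convergence (bound := fun k => C * ‖z‖ ^ k)
    ((summable_geometric_of_lt_one (norm_nonneg _) hz).mul_left C) ?_ ?_
  · intro k
    rcases Nat.eq_zero_or_pos k with rfl | hk
    · simp [ha]
    · have h0 : Tendsto (fun N : ℕ => q ^ N) atTop (𝓝 0) := tendsto_pow_atTop_nhds_zero_of_norm_lt_one hq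
      have := ((h0.mul_const z).pow k).const_mul (a k)
      simpa [hk.ne'] using this
  · refine Eventually.of_forall fun N k => ?_
    have hC0 : 0 ≤ C := (norm_nonneg _).trans (hC 0)
    rw [norm_mul, norm_pow]
    gcongr
    · exact hC k
    · rw [norm_mul, norm_pow]
      exact mul_le_of_le_one_left (norm_nonneg _) (pow_le_one₀ (norm_nonneg _) hq.le)

lemma pow_mul_lt {q z : ℂ} (hq : ‖q‖ < 1) (hz : ‖z‖ < 1) (N : ℕ) : ‖q ^ N * z‖ < 1 := by
  rw [norm_mul, norm_pow]
  exact (mul_le_of_le_one_left (norm_nonneg _) (pow_le_one₀ (norm_nonneg _) hq.le)).trans_lt hz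

lemma f1_iter {q z : ℂ} (hq : ‖q‖ < 1) (hz : ‖z‖ < 1) (N : ℕ) :
    f1 q z * ∏ i ∈ range N, (1 - q ^ i * z) = f1 q (q ^ N * z) := by
  induction N with
  | zero => simp
  | succ N ih => 
    rw [Finset.prod_range_succ, ← mul_assoc, ih, f1_rec hq (pow_mul_lt hq hz N)]
    ring_nf

lemma f2_iter {q z : ℂ} (hq : ‖q‖ < 1) (hz : ‖z‖ < 1) (N : ℕ) :
    f2 q z = (∏ i ∈ range N, (1 - q ^ i * z)) * f2 q (q ^ N * z) := by
  induction N with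
  | zero => simp
  | succ N ih => 
    rw [Finset.prod_range_succ, ih, f2_rec hq (pow_mul_lt hq hz N)]
    ring_nf

lemma f1_tendsto {q z : ℂ} (hq : ‖q‖ < 1) (hz : ‖z‖ < 1) :
    Tendsto (fun N : ℕ => f1 q (q ^ N * z)) atTop (𝓝 1) := by
  obtain ⟨C, hC0, hC⟩ := qp_inv_bdd hq
  have := series_tendsto_one (fun k => (qp q k)⁻¹) (by simp [qp]) C hC hq hz
  simpa [f1, div_eq_inv_mul] using this

lemma f2_tendsto {q z : ℂ} (hq : ‖q‖ < 1) (hz : ‖z‖ < 1) :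
    Tendsto (fun N : ℕ => f2 q (q ^ N * z)) atTop (𝓝 1) := by
  obtain ⟨C, hC0, hC⟩ := qp_inv_bdd hq
  have := series_tendsto_one (fun k => (-1) ^ k * q ^ (k.choose 2) / qp q k) (by simp [qp]) C
    (fun k => by
      rw [div_eq_mul_inv, norm_mul]
      have : ‖(-1) ^ k * q ^ (k.choose 2)‖ ≤ 1 := by
        simp only [norm_mul, norm_pow, norm_neg, norm_one, one_pow, one_mul]
        exact pow_le_one₀ (norm_nonneg _) hq.le
      exact (mul_le_of_le_one_left (norm_nonneg _) this).trans (hC k)) hq hz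
  simpa [f2, mul_div_right_comm] using this

lemma f1_ne {q z : ℂ} (hq : ‖q‖ < 1) (hz : ‖z‖ < 1) : f1 q z ≠ 0 := by
  intro h
  have := f1_tendsto hq hz
  simp_rw [← f1_iter hq hz, h, zero_mul] at this
  exact zero_ne_one (tendsto_nhds_unique tendsto_const_nhds this)

lemma prod_tendsto {q z : ℂ} (hq : ‖q‖ < 1) (hz : ‖z‖ < 1) :
    Tendsto (fun N : ℕ => ∏ i ∈ range N, (1 - q ^ i * z)) atTop (𝓝 (f1 q z)⁻¹) := by
  have := (f1_tendsto hq hz).const_mul (f1 q z)⁻¹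
  simp_rw [← f1_iter hq hz, ← mul_assoc, inv_mul_cancel₀ (f1_ne hq hz), one_mul, mul_one] at this
  exact this

lemma f2_eq {q z : ℂ} (hq : ‖q‖ < 1) (hz : ‖z‖ < 1) : f2 q z = (f1 q z)⁻¹ := by
  have h := (prod_tendsto hq hz).mul (f2_tendsto hq hz)
  simp_rw [← f2_iter hq hz, mul_one] at h
  exact tendsto_nhds_unique tendsto_const_nhds h

lemma f1_pow {q : ℂ} (hq : ‖q‖ < 1) (j : ℕ) : f1 q (q ^ (j+1)) = qp q j / Eu q := by
  have hz : ‖q ^ (j+1)‖ < 1 := by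
    rw [norm_pow]; exact pow_lt_one₀ (norm_nonneg _) hq (by omega)
  have h1 := (prod_tendsto hq hz).const_mul (qp q j)
  have h2 := (qp_tendsto hq).comp (tendsto_add_atTop_nat j)
  have : (fun N => qp q j * ∏ i ∈ range N, (1 - q ^ i * q ^ (j+1))) = (qp q ∘ fun a => a + j) := by
    ext N
    simp only [qp, Function.comp, add_comm N j, Finset.prod_range_add]
    congr 1
    refine Finset.prod_congr rfl fun i _ => by ring
  rw [this] at h1
  have h := tendsto_nhds_unique h1 h2
  have := f1_ne hq hz
  rw [← h]
  have h3 := qp_ne hq j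
  field_simp

lemma sum_identity {q : ℂ} (hq : ‖q‖ < 1) :
    ∑' k : ℕ, q ^ k / (qp q k) ^ 2 = Th q / Eu q ^ 2 := by
  have hE := Eu_ne hq
  have hpow : ∀ j : ℕ, ‖q ^ (j+1)‖ < 1 := fun j => by
    rw [norm_pow]; exact pow_lt_one₀ (norm_nonneg _) hq (by omega)
  obtain ⟨C, hC0, hC⟩ := qp_inv_bdd hq
  let G : ℕ → ℕ → ℂ := fun k j =>
    q ^ k / qp q k * ((-1) ^ j * q ^ (j.choose 2) * (q ^ (k+1)) ^ j / qp q j)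
  have hG : Summable (Function.uncurry G) := by
    refine Summable.of_norm_bounded (g := fun p : ℕ × ℕ => (C * ‖q‖ ^ p.1) * (C * ‖q‖ ^ p.2)) ?_ ?_
    · have := (summable_geometric_of_lt_one (norm_nonneg _) hq).mul_left C
      exact this.mul_of_nonneg this (fun _ => by positivity) (fun _ => by positivity)
    · rintro ⟨k, j⟩
      simp only [Function.uncurry, G, norm_mul]
      gcongr
      · rw [div_eq_inv_mul, norm_mul, norm_pow]; gcongr; exact hC k
      · rw [div_eq_inv_mul, norm_mul]; gcongr
        · exact hC j
        · simp only [norm_mul, norm_pow, norm_neg, norm_one, one_pow, one_mul]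
          rw [← pow_mul, ← pow_add]
          apply pow_le_pow_of_le_one (norm_nonneg _) hq.le
          nlinarith [Nat.zero_le (k*j), Nat.zero_le (j.choose 2)]
  have h1 : ∀ k, ∑' j, G k j = Eu q * (q ^ k / qp q k ^ 2) := fun k => by
    have : ∑' j, G k j = q ^ k / qp q k * f2 q (q ^ (k+1)) := by
      simp only [G, f2]; rw [tsum_mul_left]
    rw [this, f2_eq hq (hpow k), f1_pow hq k]
    have := qp_ne hq k
    field_simp
  have h2 : ∀ j, ∑' k, G k j = (Eu q)⁻¹ * ((-1) ^ j * q ^ ((j+1).choose 2)) := fun j => by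
    have : ∑' k, G k j = (-1) ^ j * q ^ ((j+1).choose 2) / qp q j * f1 q (q ^ (j+1)) := by
      simp only [G, f1]; rw [← tsum_mul_left]
      congr 1; ext k
      rw [show (j+1).choose 2 = j + j.choose 2 by rw [Nat.choose_succ_succ' j 1]; simp]
      have := qp_ne hq k
      have := qp_ne hq j
      field_simp
      ring
    rw [this, f1_pow hq j]
    have := qp_ne hq j
    field_simp
  have h3 := hG.tsum_comm
  simp_rw [h1, h2, tsum_mul_left] at h3
  unfold Th
  field_simp
  field_simp at h3
  linear_combination -h3

end

section
open Finset
open Filter Topology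

def Steady (p : (ℕ → ℕ) × (ℕ → ℕ)) : Prop :=
  ∀ i, max (p.1 (i + 1)) (p.2 (i + 1)) ≤ min (p.1 i) (p.2 i)

/-- pairs with at most `N` rows -/
def YN (N : ℕ) : Set ((ℕ → ℕ) × (ℕ → ℕ)) :=
  {p | Steady p ∧ ∀ i, N ≤ i → p.1 i = 0 ∧ p.2 i = 0}

/-- weight -/
noncomputable def wt (x y : ℂ) (p : (ℕ → ℕ) × (ℕ → ℕ)) : ℂ :=
  x ^ (∑ᶠ i, p.1 i) * y ^ (∑ᶠ i, p.2 i)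

lemma finsum_of_zero (a : ℕ → ℕ) (N : ℕ) (h : ∀ i, N ≤ i → a i = 0) :
    ∑ᶠ i, a i = ∑ i ∈ range N, a i := by
  apply finsum_eq_sum_of_support_subset
  intro i hi
  simp only [Function.mem_support] at hi
  simp only [coe_range, Set.mem_Iio]
  by_contra hc
  exact hi (h i (not_lt.mp hc))

lemma steady_anti {p : (ℕ → ℕ) × (ℕ → ℕ)} (h : Steady p) :
    Antitone p.1 ∧ Antitone p.2 := by
  constructor <;> refine antitone_nat_of_succ_le fun i => ?_ <;> have := h i <;> 
    simp only [max_le_iff, le_min_iff] at this <;> omega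

lemma steady_max {p : (ℕ → ℕ) × (ℕ → ℕ)} (h : Steady p) {i j : ℕ} (hij : i < j) :
    max (p.1 j) (p.2 j) ≤ min (p.1 i) (p.2 i) := by
  have h1 := h i
  have h2 := (steady_anti h).1 (show i + 1 ≤ j by omega)
  have h3 := (steady_anti h).2 (show i + 1 ≤ j by omega)
  simp only [max_le_iff, le_min_iff] at h1 ⊢
  omega

def extFun (N : ℕ) (a : ℕ → ℕ) (M p : ℕ) (i : ℕ) : ℕ :=
  if i < N then a i + M else if i = N then p else 0

def rowEquiv (N : ℕ) : (YN N) × (ℕ × ℕ) ≃ YN (N + 1) where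
  toFun z := ⟨(extFun N z.1.1.1 (max z.2.1 z.2.2) z.2.1, extFun N z.1.1.2 (max z.2.1 z.2.2) z.2.2), by
    obtain ⟨⟨⟨a, b⟩, hs, h0⟩, p, q⟩ := z
    refine ⟨fun i => ?_, fun i hi => ?_⟩
    · have h1 := hs i
      simp only [extFun] at *
      split_ifs <;> omega
    · simp only [extFun]
      constructor <;> split_ifs <;> omega⟩
  invFun z := (⟨(fun i => z.1.1 i - max (z.1.1 N) (z.1.2 N), fun i => z.1.2 i - max (z.1.1 N) (z.1.2 N)), by
    obtain ⟨⟨a, b⟩, hs, h0⟩ := z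
    refine ⟨fun i => ?_, fun i hi => ?_⟩
    · have h1 := hs i
      simp only at *
      omega
    · have h1 := (steady_anti hs).1 hi
      have h2 := (steady_anti hs).2 hi
      simp only at *
      omega⟩, (z.1.1 N, z.1.2 N))
  left_inv := by
    rintro ⟨⟨⟨a, b⟩, hs, h0⟩, p, q⟩
    refine Prod.ext (Subtype.ext (Prod.ext (funext fun i => ?_) (funext fun i => ?_))) (Prod.ext ?_ ?_)
    · show _ = a i
      have := h0 i
      simp only [extFun] at *
      split_ifs <;> first | omega | simp_all
    · show _ = b i
      have := h0 i
      simp only [extFun] at *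
      split_ifs <;> first | omega | simp_all
    · simp [extFun]
    · simp [extFun]
  right_inv := by
    rintro ⟨⟨a, b⟩, hs, h0⟩
    refine Subtype.ext (Prod.ext (funext fun i => ?_) (funext fun i => ?_))
    · have h1 := h0 i
      have h2 := @steady_max _ hs i N
      simp only [extFun] at *
      split_ifs with h3 h4
      · have := h2 h3; omega
      · rw [h4]
      · exact (h1 (by omega)).1.symm
    · have h1 := h0 i
      have h2 := @steady_max _ hs i N
      simp only [extFun] at *
      split_ifs with h3 h4
      · have := h2 h3; omega
      · rw [h4]
      · exact (h1 (by omega)).2.symm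

lemma sum_extFun (N : ℕ) (a : ℕ → ℕ) (M p : ℕ) (h : ∀ i, N ≤ i → a i = 0) :
    ∑ᶠ i, extFun N a M p i = (∑ᶠ i, a i) + N * M + p := by
  rw [finsum_of_zero _ (N+1) (fun i hi => by simp only [extFun]; split_ifs <;> omega),
    finsum_of_zero a N h, Finset.sum_range_succ]
  congr 1
  · rw [Finset.sum_congr rfl (g := fun i => a i + M) (fun i hi => by
      simp only [extFun]; rw [if_pos (by simpa using hi)])]
    simp [Finset.sum_add_distrib]
  · simp [extFun]

/-- row weight -/
noncomputable def rw' (N : ℕ) (x y : ℂ) (z : ℕ × ℕ) : ℂ := (x * y) ^ (N * max z.1 z.2) * (x ^ z.1 * y ^ z.2)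

lemma wt_rowEquiv (N : ℕ) (x y : ℂ) (z : (YN N) × (ℕ × ℕ)) :
    wt x y (rowEquiv N z).1 = wt x y z.1.1 * rw' N x y z.2 := by
  obtain ⟨⟨⟨a, b⟩, hs, h0⟩, p, q⟩ := z
  simp only [wt, rowEquiv, Equiv.coe_fn_mk, rw']
  rw [sum_extFun _ _ _ _ (fun i hi => (h0 i hi).1), sum_extFun _ _ _ _ (fun i hi => (h0 i hi).2)]
  simp only [pow_add, mul_pow]
  ring

def splitEquiv : (ℕ × ℕ) ⊕ (ℕ × ℕ) ≃ ℕ × ℕ where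
  toFun z := match z with
    | Sum.inl (m, d) => (m + d, m)
    | Sum.inr (m, d) => (m, m + d + 1)
  invFun z := if z.2 ≤ z.1 then Sum.inl (z.2, z.1 - z.2) else Sum.inr (z.1, z.2 - z.1 - 1)
  left_inv := by
    rintro (⟨m, d⟩ | ⟨m, d⟩)
    · simp
    · have : ¬ (m + d + 1 ≤ m) := by omega
      simp only [this, if_false, Sum.inr.injEq, Prod.mk.injEq, true_and]
      omega
  right_inv := by
    rintro ⟨a, b⟩
    by_cases h : b ≤ a
    · simp [h]
    · simp only [h, if_false, Prod.mk.injEq, true_and]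
      omega

/-- row generating function -/
noncomputable def Rf (N : ℕ) (x y : ℂ) : ℂ :=
  (1 - (x*y) ^ (2*N+1)) / ((1 - (x*y)^(N+1)) * ((1 - (x*y)^N * x) * (1 - (x*y)^N * y)))

lemma geo2 {A B : ℂ} (hA : ‖A‖ < 1) (hB : ‖B‖ < 1) :
    Summable (fun z : ℕ × ℕ => ‖A ^ z.1 * B ^ z.2‖) ∧
    HasSum (fun z : ℕ × ℕ => A ^ z.1 * B ^ z.2) ((1 - A)⁻¹ * (1 - B)⁻¹) := by
  have h1 : Summable fun n : ℕ => ‖A ^ n‖ := by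
    simpa using summable_geometric_of_lt_one (norm_nonneg _) hA
  have h2 : Summable fun n : ℕ => ‖B ^ n‖ := by
    simpa using summable_geometric_of_lt_one (norm_nonneg _) hB
  refine ⟨?_, ?_⟩
  · simpa using! h1.mul_norm h2
  · exact (hasSum_geometric_of_norm_lt_one hA).mul (hasSum_geometric_of_norm_lt_one hB)
      (summable_mul_of_summable_norm h1 h2)

lemma one_sub_ne' {A : ℂ} (hA : ‖A‖ < 1) : 1 - A ≠ 0 := by
  intro h
  rw [← sub_eq_zero.mp h] at hA
  simp at hA

lemma row_hasSum {x y : ℂ} (hx : ‖x‖ < 1) (hy : ‖y‖ < 1) (N : ℕ) :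
    Summable (fun z => ‖rw' N x y z‖) ∧ HasSum (rw' N x y) (Rf N x y) := by
  have hq : ‖x * y‖ < 1 := by
    rw [norm_mul]; exact mul_lt_one_of_nonneg_of_lt_one_left (norm_nonneg _) hx hy.le
  have hA : ‖(x*y)^(N+1)‖ < 1 := by
    rw [norm_pow]; exact pow_lt_one₀ (norm_nonneg _) hq (by omega)
  have hB := pow_mul_lt hq hx N
  have hC := pow_mul_lt hq hy N
  obtain ⟨s1, t1⟩ := geo2 hA hB
  obtain ⟨s2, t2⟩ := geo2 hA hC
  have e1 : ∀ z : ℕ × ℕ, rw' N x y (splitEquiv (Sum.inl z)) = ((x*y)^(N+1)) ^ z.1 * ((x*y)^N * x) ^ z.2 := by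
    rintro ⟨m, d⟩
    simp only [splitEquiv, Equiv.coe_fn_mk, rw', show max (m+d) m = m + d by omega]
    simp only [mul_pow, ← pow_mul]
    ring
  have e2 : ∀ z : ℕ × ℕ, rw' N x y (splitEquiv (Sum.inr z)) = ((x*y)^N*y) * (((x*y)^(N+1)) ^ z.1 * ((x*y)^N * y) ^ z.2) := by
    rintro ⟨m, d⟩
    simp only [splitEquiv, Equiv.coe_fn_mk, rw', show max m (m+d+1) = m + d + 1 by omega]
    simp only [mul_pow, ← pow_mul]
    ring
  have key : Summable (fun z => ‖rw' N x y z‖) := by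
    rw [← splitEquiv.summable_iff]
    apply Summable.sum
    · simpa [Function.comp_def, e1] using s1
    · simpa [Function.comp_def, e2, mul_assoc] using s2.mul_left ‖(x*y)^N*y‖
  refine ⟨key, ?_⟩
  rw [← splitEquiv.hasSum_iff]
  have : Rf N x y = (1 - (x*y)^(N+1))⁻¹ * (1 - (x*y)^N * x)⁻¹ +
      ((x*y)^N*y) * ((1 - (x*y)^(N+1))⁻¹ * (1 - (x*y)^N * y)⁻¹) := by
    have h1 := one_sub_ne' hA
    have h2 := one_sub_ne' hB
    have h3 := one_sub_ne' hC
    unfold Rf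
    rw [show (x*y)^(2*N+1) = ((x*y)^N * x) * ((x*y)^N*y) by ring]
    generalize (x*y)^N * x = X at *
    generalize (x*y)^N * y = Y at *
    generalize (x*y)^(N+1) = Z at *
    field_simp
    ring
  rw [this]
  apply HasSum.sum
  · simpa [Function.comp_def, e1] using t1
  · simpa [Function.comp_def, e2] using t2.mul_left ((x*y)^N*y)

lemma YN_hasSum {x y : ℂ} (hx : ‖x‖ < 1) (hy : ‖y‖ < 1) (N : ℕ) :
    Summable (fun z : YN N => ‖wt x y z‖) ∧
    HasSum (fun z : YN N => wt x y z) (∏ i ∈ range N, Rf i x y) := by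
  induction N with
  | zero =>
    have hz : ((fun _ => 0, fun _ => 0) : (ℕ → ℕ) × (ℕ → ℕ)) ∈ YN 0 := by
      refine ⟨fun i => by simp, fun i _ => by simp⟩
    have : Unique (YN 0) := ⟨⟨⟨_, hz⟩⟩, fun z => by
      obtain ⟨⟨a, b⟩, hs, h0⟩ := z
      apply Subtype.ext
      refine Prod.ext (funext fun i => (h0 i (Nat.zero_le _)).1) (funext fun i => (h0 i (Nat.zero_le _)).2)⟩
    refine ⟨(hasSum_unique _).summable, ?_⟩
    convert hasSum_unique _
    rw [Subsingleton.elim default (⟨_, hz⟩ : YN 0)]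
    simp [wt]
  | succ N ih =>
    obtain ⟨s1, t1⟩ := ih
    obtain ⟨s2, t2⟩ := row_hasSum hx hy N
    have e : ∀ z, wt x y (rowEquiv N z).1 = wt x y z.1.1 * rw' N x y z.2 := wt_rowEquiv N x y
    constructor
    · rw [← (rowEquiv N).summable_iff]
      simp only [Function.comp_def, e]
      exact Summable.mul_norm (f := fun z : YN N => wt x y z) (g := rw' N x y) s1 s2
    · rw [← (rowEquiv N).hasSum_iff, Finset.prod_range_succ]
      simp only [Function.comp_def, e]
      exact HasSum.mul (f := fun z : YN N => wt x y z) (g := rw' N x y) t1 t2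
        (summable_mul_of_summable_norm (f := fun z : YN N => wt x y z) (g := rw' N x y) s1 s2)

end

section
open Finset
open Filter Topology

lemma qp_odd {q : ℂ} (hq : ‖q‖ < 1) (N : ℕ) :
    ∏ i ∈ range N, (1 - q ^ (2*i+1)) = qp q (2*N) / qp (q^2) N := by
  have hq2 : ‖q^2‖ < 1 := by rw [norm_pow]; exact pow_lt_one₀ (norm_nonneg _) hq (by omega)
  rw [eq_div_iff (qp_ne hq2 N)]
  induction N with
  | zero => simp [qp]
  | succ N ih =>
    rw [Finset.prod_range_succ, show 2*(N+1) = 2*N+1+1 by ring, qp_succ, qp_succ q (2*N+1), qp_succ q (2*N), ← ih]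
    ring

lemma Rf_prod_tendsto {x y : ℂ} (hx : ‖x‖ < 1) (hy : ‖y‖ < 1) :
    Tendsto (fun N => ∏ i ∈ range N, Rf i x y) atTop
      (𝓝 ((Eu ((x*y)^2))⁻¹ * (f1 (x*y) x * f1 (x*y) y))) := by
  have hq : ‖x * y‖ < 1 := by
    rw [norm_mul]; exact mul_lt_one_of_nonneg_of_lt_one_left (norm_nonneg _) hx hy.le
  set q := x * y with hqd
  have hq2 : ‖q^2‖ < 1 := by rw [norm_pow]; exact pow_lt_one₀ (norm_nonneg _) hq (by omega)
  have e : (fun N => ∏ i ∈ range N, Rf i x y) = fun N => qp q (2*N) / qp (q^2) N / qp q N /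
      ((∏ i ∈ range N, (1 - q ^ i * x)) * (∏ i ∈ range N, (1 - q ^ i * y))) := by
    ext N
    rw [← qp_odd hq]
    simp only [Rf, ← hqd, Finset.prod_div_distrib, Finset.prod_mul_distrib, qp]
    rw [div_div]
  rw [e]
  have h2N : Tendsto (fun N : ℕ => 2 * N) atTop atTop := tendsto_id.const_mul_atTop' (by norm_num)
  have h := ((((qp_tendsto hq).comp h2N).div (qp_tendsto hq2) (Eu_ne hq2)).div
    (qp_tendsto hq) (Eu_ne hq)).div ((prod_tendsto hq hx).mul (prod_tendsto hq hy))
    (mul_ne_zero (inv_ne_zero (f1_ne hq hx)) (inv_ne_zero (f1_ne hq hy)))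
  have h3 := Eu_ne hq
  have h4 := Eu_ne hq2
  have e2 : (Eu (q^2))⁻¹ * (f1 q x * f1 q y) = Eu q / Eu (q ^ 2) / Eu q / ((f1 q x)⁻¹ * (f1 q y)⁻¹) := by
    field_simp
  rw [e2]
  exact h

/-- all pairs -/
def YS : Set ((ℕ → ℕ) × (ℕ → ℕ)) := {p | ∃ N, p ∈ YN N}

lemma YN_mono {N M : ℕ} (h : N ≤ M) : YN N ⊆ YN M := fun _ hp =>
  ⟨hp.1, fun i hi => hp.2 i (h.trans hi)⟩

lemma ind_eventually (f : (ℕ → ℕ) × (ℕ → ℕ) → ℂ) (p : (ℕ → ℕ) × (ℕ → ℕ)) :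
    ∀ᶠ N in atTop, (YN N).indicator f p = YS.indicator f p := by
  by_cases hp : p ∈ YS
  · obtain ⟨M, hM⟩ := hp
    filter_upwards [eventually_ge_atTop M] with N hN
    rw [Set.indicator_of_mem (YN_mono hN hM), Set.indicator_of_mem (s := YS) ⟨M, hM⟩]
  · refine Eventually.of_forall fun N => ?_
    rw [Set.indicator_of_notMem hp, Set.indicator_of_notMem]
    exact fun h => hp ⟨N, h⟩

lemma norm_wt (x y : ℂ) (p) : (‖wt x y p‖ : ℂ) = wt ‖x‖ ‖y‖ p := by
  simp [wt]

lemma YS_hasSum {x y : ℂ} (hx : ‖x‖ < 1) (hy : ‖y‖ < 1) :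
    Summable (fun p => ‖YS.indicator (wt x y) p‖) ∧
    HasSum (YS.indicator (wt x y)) ((Eu ((x*y)^2))⁻¹ * (f1 (x*y) x * f1 (x*y) y)) := by
  have hx' : ‖(‖x‖ : ℂ)‖ < 1 := by simpa using hx
  have hy' : ‖(‖y‖ : ℂ)‖ < 1 := by simpa using hy
  have key : ∃ C : ℝ, ∀ N, ∑' p, ‖(YN N).indicator (wt x y) p‖ ≤ C := by
    obtain ⟨C, hC⟩ := (Metric.isBounded_range_of_tendsto _ (Rf_prod_tendsto hx' hy')).exists_norm_le
    refine ⟨C, fun N => ?_⟩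
    have h1 := (YN_hasSum hx' hy' N).2.tsum_eq
    have h2 := hC _ ⟨N, rfl⟩
    dsimp only at h2
    rw [← h1] at h2
    simp only [← norm_wt] at h2
    rw [← Complex.ofReal_tsum, Complex.norm_real] at h2
    simp only [norm_indicator_eq_indicator_norm]
    rw [← _root_.tsum_subtype (YN N) (fun p => ‖wt x y p‖)]
    exact (le_abs_self _).trans h2
  obtain ⟨C, hC⟩ := key
  have hsN : ∀ N, Summable fun p => ‖(YN N).indicator (wt x y) p‖ := fun N => by
    simp only [norm_indicator_eq_indicator_norm]
    exact summable_subtype_iff_indicator.mp (YN_hasSum hx hy N).1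
  have hs : Summable (fun p => ‖YS.indicator (wt x y) p‖) := by
    refine summable_of_sum_le (c := C) (fun _ => norm_nonneg _) fun u => ?_
    obtain ⟨N, hN⟩ := ((eventually_all_finset u).mpr fun p _ => ind_eventually (wt x y) p).exists
    rw [← Finset.sum_congr rfl (fun p hp => congrArg norm (hN p hp))]
    exact ((hsN N).sum_le_tsum u (fun _ _ => norm_nonneg _)).trans (hC N)
  refine ⟨hs, ?_⟩
  have h1 : Tendsto (fun N => ∑' p, (YN N).indicator (wt x y) p) atTop
      (𝓝 (∑' p, YS.indicator (wt x y) p)) := by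
    refine tendsto_tsum_of_dominated_convergence hs (fun p => ?_) (Eventually.of_forall fun N p => ?_)
    · exact tendsto_const_nhds.congr' ((ind_eventually (wt x y) p).mono fun N h => h.symm)
    · simp only [norm_indicator_eq_indicator_norm]
      exact Set.indicator_le_indicator_of_subset (show YN N ⊆ YS from fun p hp => ⟨N, hp⟩) (fun _ => norm_nonneg _) p
  have h2 : (fun N => ∑' p, (YN N).indicator (wt x y) p) = fun N => ∏ i ∈ range N, Rf i x y := by
    ext N
    rw [← _root_.tsum_subtype]
    exact (YN_hasSum hx hy N).2.tsum_eq
  rw [h2] at h1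
  rw [← tendsto_nhds_unique h1 (Rf_prod_tendsto hx hy)]
  exact hs.of_norm.hasSum

/-- finsupp version of the pairs -/
def XS : Type := {p : (ℕ →₀ ℕ) × (ℕ →₀ ℕ) // SteadilyDecreasing p.1 p.2}

instance : Countable XS := inferInstanceAs (Countable {p : (ℕ →₀ ℕ) × (ℕ →₀ ℕ) // SteadilyDecreasing p.1 p.2})

noncomputable def sz1 (p : XS) : ℕ := p.1.1.sum fun _ x => x
noncomputable def sz2 (p : XS) : ℕ := p.1.2.sum fun _ x => x

def toY (p : XS) : (ℕ → ℕ) × (ℕ → ℕ) := (p.1.1, p.1.2)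

lemma toY_inj : Function.Injective toY := by
  rintro ⟨⟨a, b⟩, h⟩ ⟨⟨c, d⟩, h'⟩ e
  simp only [toY, Prod.mk.injEq, DFunLike.coe_fn_eq] at e
  obtain ⟨rfl, rfl⟩ := e
  rfl

lemma toY_range : Set.range toY = YS := by
  ext ⟨a, b⟩
  constructor
  · rintro ⟨⟨⟨c, d⟩, h⟩, e⟩
    rw [← e]
    refine ⟨c.support.sup id + d.support.sup id + 1, h, fun i hi => ?_⟩
    simp only [toY]
    constructor <;> by_contra hc
    · have := Finset.le_sup (f := id) (Finsupp.mem_support_iff.mpr hc)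
      simp only [id] at this; omega
    · have := Finset.le_sup (f := id) (Finsupp.mem_support_iff.mpr hc)
      simp only [id] at this; omega
  · rintro ⟨N, h, h0⟩
    refine ⟨⟨(Finsupp.onFinset (range N) a fun i hi => ?_, Finsupp.onFinset (range N) b fun i hi => ?_), h⟩, rfl⟩
    · by_contra hc
      exact hi (h0 i (by simpa using hc)).1
    · by_contra hc
      exact hi (h0 i (by simpa using hc)).2

lemma finsupp_sum_eq (a : ℕ →₀ ℕ) : ∑ᶠ i, a i = a.sum fun _ x => x := by
  rw [finsum_eq_sum_of_support_subset (s := a.support)]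
  · rfl
  · intro i hi; simpa using hi

lemma XS_hasSum {x y : ℂ} (hx : ‖x‖ < 1) (hy : ‖y‖ < 1) :
    Summable (fun p : XS => ‖x ^ sz1 p * y ^ sz2 p‖) ∧
    HasSum (fun p : XS => x ^ sz1 p * y ^ sz2 p) ((Eu ((x*y)^2))⁻¹ * (f1 (x*y) x * f1 (x*y) y)) := by
  obtain ⟨h1, h2⟩ := YS_hasSum hx hy
  have e : ∀ p : XS, YS.indicator (wt x y) (toY p) = x ^ sz1 p * y ^ sz2 p := fun p => by
    rw [Set.indicator_of_mem (by rw [← toY_range]; exact ⟨p, rfl⟩)]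
    simp [wt, toY, finsupp_sum_eq, sz1, sz2]
  have h0 : ∀ p, p ∉ Set.range toY → YS.indicator (wt x y) p = 0 := fun p hp => by
    rw [toY_range] at hp
    exact Set.indicator_of_notMem hp _
  constructor
  · have := h1.comp_injective toY_inj
    simpa [Function.comp_def, e] using this
  · rw [← toY_inj.hasSum_iff h0] at h2
    simpa [Function.comp_def, e] using h2

lemma ct_basic (k : ℤ) : ∫ φ in (-Real.pi)..Real.pi, Complex.exp (k * φ * Complex.I) =
    if k = 0 then 2 * Real.pi else 0 := by
  split_ifs with h
  · subst h; simp; ring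
  · have hc : (k * Complex.I : ℂ) ≠ 0 := mul_ne_zero (by exact_mod_cast h) Complex.I_ne_zero
    have := integral_exp_mul_complex (a := -Real.pi) (b := Real.pi) hc
    rw [show (fun φ : ℝ => Complex.exp (k * φ * Complex.I)) = fun φ : ℝ => Complex.exp (k * Complex.I * φ) by
      ext φ; ring_nf]
    rw [this, Complex.ofReal_zero, div_eq_zero_iff]
    left
    rw [sub_eq_zero, Complex.exp_eq_exp_iff_exists_int]
    exact ⟨k, by push_cast; ring⟩

lemma HasSum.congr_fun' {ι : Type*} {f g : ι → ℂ} {a : ℂ} (h : HasSum f a) (e : ∀ i, g i = f i) :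
    HasSum g a := by
  rw [show g = f from funext e]; exact h

lemma ct_lemma {ι : Type*} [Countable ι] (a : ι → ℂ) (g : ι → ℤ) (ha : Summable fun j => ‖a j‖)
    (F : ℝ → ℂ) (hF : ∀ φ : ℝ, HasSum (fun j => a j * Complex.exp (g j * φ * Complex.I)) (F φ)) :
    ∫ φ in (-Real.pi)..Real.pi, F φ = 2 * Real.pi * ∑' j, if g j = 0 then a j else 0 := by
  have h := intervalIntegral.hasSum_integral_of_dominated_convergence (a := -Real.pi) (b := Real.pi)
    (μ := MeasureTheory.volume) (F := fun j (φ : ℝ) => a j * Complex.exp (g j * φ * Complex.I)) (f := F)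
    (fun j _ => ‖a j‖) (fun j => by
      apply Continuous.aestronglyMeasurable; fun_prop)
    (fun j => Eventually.of_forall fun φ _ => by
      rw [norm_mul, show (g j * φ * Complex.I : ℂ) = ((g j * φ : ℝ) : ℂ) * Complex.I by push_cast; ring,
        Complex.norm_exp_ofReal_mul_I, mul_one])
    (Eventually.of_forall fun _ _ => ha) (by simp) (Eventually.of_forall fun φ _ => hF φ)
  rw [← h.tsum_eq, ← tsum_mul_left]
  congr 1; ext j
  rw [intervalIntegral.integral_const_mul, ct_basic]
  split_ifs
  · push_cast; ring
  · simp

/-- generating function -/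
noncomputable def Fq (q : ℂ) : ℂ := Th q / (Eu q ^ 2 * Eu (q ^ 2))

lemma f1f1_hasSum {q x y : ℂ} (hq : ‖q‖ < 1) (hx : ‖x‖ < 1) (hy : ‖y‖ < 1) :
    HasSum (fun p : ℕ × ℕ => x ^ p.1 / qp q p.1 * (y ^ p.2 / qp q p.2)) (f1 q x * f1 q y) := by
  have h1 := f1_summable hq hx
  have h2 := f1_summable hq hy
  exact HasSum.mul (f := fun k : ℕ => x ^ k / qp q k) (g := fun k : ℕ => y ^ k / qp q k)
    h1.of_norm.hasSum h2.of_norm.hasSum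
    (summable_mul_of_summable_norm (f := fun k : ℕ => x ^ k / qp q k) (g := fun k : ℕ => y ^ k / qp q k) h1 h2)

lemma diag_gf {q : ℂ} (hq : ‖q‖ < 1) :
    Summable (fun p : XS => ‖if sz1 p = sz2 p then q ^ sz1 p else 0‖) ∧
    HasSum (fun p : XS => if sz1 p = sz2 p then q ^ sz1 p else 0) (Fq q) := by
  obtain ⟨w, hw⟩ : ∃ w : ℂ, w ^ 2 = q := IsAlgClosed.exists_pow_nat_eq q (by norm_num)
  have hw1 : ‖w‖ < 1 := by
    rw [← hw, norm_pow] at hq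
    exact (sq_lt_one_iff₀ (norm_nonneg _)).mp hq
  have hs : Summable (fun p : XS => ‖w ^ sz1 p * w ^ sz2 p‖) := (XS_hasSum hw1 hw1).1
  have hterm : ∀ p : XS, (if sz1 p = sz2 p then q ^ sz1 p else 0) =
      if ((sz1 p : ℤ) - sz2 p) = 0 then w ^ sz1 p * w ^ sz2 p else 0 := fun p => by
    by_cases h : sz1 p = sz2 p
    · rw [if_pos h, if_pos (by omega), ← h, ← hw]; ring
    · rw [if_neg h, if_neg (by omega)]
  have hsum : Summable (fun p : XS => ‖if sz1 p = sz2 p then q ^ sz1 p else 0‖) := by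
    refine Summable.of_nonneg_of_le (fun _ => norm_nonneg _) (fun p => ?_) hs
    rw [hterm]
    split_ifs
    · exact le_rfl
    · rw [norm_zero]; positivity
  refine ⟨hsum, ?_⟩
  have hexp : ∀ (k l : ℕ) (φ : ℝ), (w * Complex.exp (φ * Complex.I)) ^ k * (w * Complex.exp (-φ * Complex.I)) ^ l
      = w ^ k * w ^ l * Complex.exp (((k : ℤ) - (l : ℤ) : ℤ) * φ * Complex.I) := fun k l φ => by
    rw [mul_pow, mul_pow, ← Complex.exp_nat_mul, ← Complex.exp_nat_mul,
      show (((k : ℤ) - (l : ℤ) : ℤ) * φ * Complex.I : ℂ) = k * (φ * Complex.I) + l * (-φ * Complex.I) by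
        push_cast; ring, Complex.exp_add]
    ring
  have hnx : ∀ φ : ℝ, ‖w * Complex.exp (φ * Complex.I)‖ < 1 := fun φ => by
    rw [norm_mul, Complex.norm_exp_ofReal_mul_I, mul_one]; exact hw1
  have hny : ∀ φ : ℝ, ‖w * Complex.exp (-φ * Complex.I)‖ < 1 := fun φ => by
    have := hnx (-φ); push_cast at this; exact this
  have hxy : ∀ φ : ℝ, (w * Complex.exp (φ * Complex.I)) * (w * Complex.exp (-φ * Complex.I)) = q := fun φ => by
    have := hexp 1 1 φ
    simp only [pow_one] at this
    rw [this, ← hw]; simp; ring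
  let F : ℝ → ℂ := fun φ => (Eu (q^2))⁻¹ * (f1 q (w * Complex.exp (φ * Complex.I)) * f1 q (w * Complex.exp (-φ * Complex.I)))
  have I1 := ct_lemma (fun p : XS => w ^ sz1 p * w ^ sz2 p) (fun p => (sz1 p : ℤ) - sz2 p) hs F (fun φ => by
    have := (XS_hasSum (hnx φ) (hny φ)).2
    rw [hxy] at this
    simpa only [hexp] using this)
  have hfs := f1_summable hq hw1
  have hs2 := Summable.mul_norm (f := fun k : ℕ => w ^ k / qp q k) (g := fun k : ℕ => w ^ k / qp q k) hfs hfs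
  have hs3 : Summable fun p : ℕ × ℕ => ‖(Eu (q^2))⁻¹ * (w ^ p.1 / qp q p.1 * (w ^ p.2 / qp q p.2))‖ := by
    simp only [norm_mul] at hs2 ⊢
    exact hs2.mul_left _
  have I2 := ct_lemma (fun p : ℕ × ℕ => (Eu (q^2))⁻¹ * (w ^ p.1 / qp q p.1 * (w ^ p.2 / qp q p.2)))
    (fun p => (p.1 : ℤ) - p.2) hs3 F (fun φ => by
      have := (f1f1_hasSum hq (hnx φ) (hny φ)).mul_left (Eu (q^2))⁻¹
      refine this.congr_fun' fun p => ?_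
      obtain ⟨k, l⟩ := p
      have := hexp k l φ
      simp only
      rw [div_mul_div_comm, div_mul_div_comm, this]
      ring)
  have hpi : (2 * Real.pi : ℂ) ≠ 0 := by simp [Real.pi_ne_zero]
  have I3 := mul_left_cancel₀ hpi (I1.symm.trans I2)
  have : ∑' p : XS, (if sz1 p = sz2 p then q ^ sz1 p else 0) = Fq q := by
    simp only [hterm]
    rw [I3]
    have hs4 : Summable fun p : ℕ × ℕ => if ((p.1 : ℤ) - p.2) = 0 then (Eu (q^2))⁻¹ * (w ^ p.1 / qp q p.1 * (w ^ p.2 / qp q p.2)) else 0 := by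
      refine Summable.of_norm (Summable.of_nonneg_of_le (fun _ => norm_nonneg _) (fun p => ?_) hs3)
      split_ifs
      · exact le_rfl
      · rw [norm_zero]; positivity
    rw [hs4.tsum_prod]
    have : ∀ k : ℕ, ∑' l : ℕ, (if ((k : ℤ) - l) = 0 then (Eu (q^2))⁻¹ * (w ^ k / qp q k * (w ^ l / qp q l)) else 0)
        = (Eu (q^2))⁻¹ * (q ^ k / qp q k ^ 2) := fun k => by
      rw [tsum_eq_single k]
      · rw [if_pos (by omega), ← hw, div_mul_div_comm]; ring
      · intro l hl
        rw [if_neg (by omega)]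
    simp only [this]
    rw [tsum_mul_left, sum_identity hq, Fq, div_mul_eq_div_div, div_eq_inv_mul (Th q / Eu q ^ 2)]
  rw [← this]
  exact hsum.of_norm.hasSum

lemma coef_formula {r : ℝ} (hr0 : 0 < r) (hr : r < 1) (n : ℕ) :
    ∫ θ in (-Real.pi)..Real.pi, Fq (r * Complex.exp (θ * Complex.I)) * Complex.exp (-(n * θ * Complex.I))
      = 2 * Real.pi * (bipartitePi n n * (r : ℂ) ^ n) := by
  have hrn : ‖(r : ℂ)‖ < 1 := by simpa [abs_of_pos hr0] using hr
  have h := ct_lemma (fun p : XS => if sz1 p = sz2 p then (r : ℂ) ^ sz1 p else 0)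
    (fun p => (sz1 p : ℤ) - n) (diag_gf hrn).1
    (fun θ => Fq (r * Complex.exp (θ * Complex.I)) * Complex.exp (-(n * θ * Complex.I))) (fun θ => by
      have hn : ‖(r : ℂ) * Complex.exp (θ * Complex.I)‖ < 1 := by
        rw [norm_mul, Complex.norm_exp_ofReal_mul_I, mul_one]; exact hrn
      have := (diag_gf hn).2.mul_right (Complex.exp (-(n * θ * Complex.I)))
      refine this.congr_fun' fun p => ?_
      split_ifs
      · rw [mul_pow, ← Complex.exp_nat_mul, mul_assoc ((r : ℂ) ^ sz1 p), ← Complex.exp_add]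
        congr 2; push_cast; ring
      · simp)
  rw [h]
  congr 1
  have e : ∀ p : XS, (if ((sz1 p : ℤ) - n) = 0 then (if sz1 p = sz2 p then (r : ℂ) ^ sz1 p else 0) else 0)
      = Set.indicator {p : XS | sz1 p = n ∧ sz2 p = n} (fun _ => (r:ℂ)^n) p := fun p => by
    simp only [Set.indicator, Set.mem_ofPred_eq]
    by_cases h1 : sz1 p = n
    · by_cases h2 : sz2 p = n
      · rw [if_pos (by omega), if_pos (by omega), if_pos ⟨h1, h2⟩, h1]
      · rw [if_pos (by omega), if_neg (by omega), if_neg (by tauto)]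
    · rw [if_neg (by omega), if_neg (by tauto)]
  simp only [e]
  rw [← _root_.tsum_subtype, tsum_const, nsmul_eq_mul]
  congr 2
  unfold bipartitePi
  refine Nat.card_congr ⟨fun p => ⟨p.1.1, ?_, ?_, p.1.2, p.2.1, p.2.2⟩, fun p => ⟨⟨p.1, p.2.2.2.1⟩, p.2.2.2.2⟩,
    fun p => rfl, fun p => rfl⟩
  · intro i; have := p.1.2 i; simp only [max_le_iff, le_min_iff] at this; exact this.1.1
  · intro i; have := p.1.2 i; simp only [max_le_iff, le_min_iff] at this; exact this.2.2

end

section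
open Finset
open Filter Topology

lemma Eu_transform {s : ℂ} (hs : 0 < s.re) :
    (Eu (Complex.exp (-s)))⁻¹ = (Complex.sqrt (Complex.I * s / (2 * Real.pi)) / Complex.sqrt Complex.I) *
      Complex.exp (-s / 24) * Complex.exp (Real.pi ^ 2 / (6 * s)) * (Eu (Complex.exp (-4 * Real.pi ^ 2 / s)))⁻¹ := by
  have hs0 : s ≠ 0 := by rintro rfl; simp at hs
  have hpi : (Real.pi : ℂ) ≠ 0 := by exact_mod_cast Real.pi_ne_zero
  have hI := Complex.I_ne_zero
  set z : ℂ := Complex.I * s / (2 * Real.pi) with hz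
  have hzm : z ∈ UpperHalfPlane.upperHalfPlaneSet := by
    show 0 < z.im
    have : z = Complex.I * s * (((2 * Real.pi)⁻¹ : ℝ) : ℂ) := by rw [hz]; push_cast; ring
    rw [this, Complex.im_mul_ofReal]
    simp only [Complex.mul_im, Complex.I_re, Complex.I_im, zero_mul, one_mul, zero_add]
    have := Real.pi_pos
    positivity
  have h := ModularForm.eta_comp_eq_csqrt_I_inv hzm
  have e1 : ModularForm.eta z = Complex.exp (-s/24) * Eu (Complex.exp (-s)) := by
    have : 2 * Real.pi * Complex.I * z = -s := by
      rw [hz]; field_simp; rw [Complex.I_sq]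
    simp only [ModularForm.eta, ModularForm.eta_q, Function.Periodic.qParam, Eu]
    push_cast
    rw [this, div_one]
  have e2 : ModularForm.eta (-1 / z) = Complex.exp (-(Real.pi ^ 2 / (6 * s))) * Eu (Complex.exp (-4 * Real.pi ^ 2 / s)) := by
    have : 2 * Real.pi * Complex.I * (-1 / z) = -4 * Real.pi ^ 2 / s := by
      rw [hz]; field_simp
      norm_num
    simp only [ModularForm.eta, ModularForm.eta_q, Function.Periodic.qParam, Eu]
    push_cast
    rw [this, div_one]
    congr 2
    field_simp
    norm_num
  have hsI : Complex.sqrt Complex.I ≠ 0 := by simp [Complex.sqrt]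
  simp only [Function.comp, e2, Pi.smul_apply, Pi.mul_apply, smul_eq_mul, e1] at h
  have n1 : Eu (Complex.exp (-s)) ≠ 0 := Eu_ne (by rw [Complex.norm_exp]; simpa using hs)
  have n2 : Eu (Complex.exp (-4 * Real.pi ^ 2 / s)) ≠ 0 := by
    intro h0
    have hz2 : ModularForm.eta (-1/z) ≠ 0 := ModularForm.eta_ne_zero (by
      show 0 < (-1/z).im
      rw [neg_div, one_div, Complex.neg_im, Complex.inv_im]
      have h1 : 0 < z.im := hzm
      have h2 : 0 < Complex.normSq z := Complex.normSq_pos.mpr (by rintro h; rw [h] at h1; simp at h1)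
      rw [neg_div, neg_neg]; positivity)
    rw [e2, h0, mul_zero] at hz2
    exact hz2 rfl
  rw [Complex.exp_neg] at h
  have n3 := Complex.exp_ne_zero (Real.pi ^ 2 / (6 * s))
  generalize Complex.exp (Real.pi ^ 2 / (6 * s)) = a at *
  generalize Complex.exp (-s/24) = b at *
  generalize Eu (Complex.exp (-s)) = c at *
  generalize Eu (Complex.exp (-4 * Real.pi ^ 2 / s)) = d at *
  field_simp at h ⊢
  linear_combination h

lemma sqrt_sq' (z : ℂ) : Complex.sqrt z ^ 2 = z := by
  simp [Complex.sqrt]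

/-- The constant A -/
noncomputable def cA : ℝ := 5 * Real.pi ^ 2 / 12

/-- error factor -/
noncomputable def Er (s : ℂ) : ℂ :=
  (Eu (Complex.exp (-4 * Real.pi ^ 2 / s)))⁻¹ ^ 2 * (Eu (Complex.exp (-4 * Real.pi ^ 2 / (2 * s))))⁻¹

lemma prod_transform {s : ℂ} (hs : 0 < s.re) :
    (Eu (Complex.exp (-s)) ^ 2 * Eu (Complex.exp (-s) ^ 2))⁻¹ =
      (s / (2 * Real.pi)) * (Complex.sqrt (Complex.I * s / Real.pi) / Complex.sqrt Complex.I) *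
      Complex.exp (-s / 6) * Complex.exp (cA / s) * Er s := by
  have hs0 : s ≠ 0 := by rintro rfl; simp at hs
  have h1 := Eu_transform hs
  have h2 := Eu_transform (s := 2 * s) (by simpa using hs)
  have hsI : Complex.sqrt Complex.I ^ 2 = Complex.I := sqrt_sq' _
  rw [mul_inv, ← inv_pow, ← Complex.exp_nat_mul, show ((2:ℕ) : ℂ) * -s = -(2*s) by push_cast; ring, h1, h2,
    show Complex.I * (2 * s) / (2 * Real.pi) = Complex.I * s / Real.pi by field_simp]
  rw [mul_pow, mul_pow, mul_pow, div_pow, hsI, sqrt_sq', ← Complex.exp_nat_mul, ← Complex.exp_nat_mul]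
  have e1 : Complex.exp (-s/6) = Complex.exp (((2:ℕ):ℂ) * (-s/24)) * Complex.exp (-(2*s)/24) := by
    rw [← Complex.exp_add]; congr 1; push_cast; ring
  have e2 : Complex.exp (cA/s) = Complex.exp (((2:ℕ):ℂ) * (Real.pi ^ 2 / (6 * s))) * Complex.exp (Real.pi^2/(6 * (2*s))) := by
    rw [← Complex.exp_add]; congr 1; unfold cA; push_cast; field_simp; ring
  rw [e1, e2, Er]
  have : Complex.I * s / (2 * Real.pi) / Complex.I = s / (2 * Real.pi) := by
    have := Complex.I_ne_zero
    field_simp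
  rw [this]
  ring

lemma Eu_tendsto_zero : Tendsto Eu (𝓝 0) (𝓝 1) := by
  have h := ModularForm.differentiableOn_tprod_one_sub_pow.continuousOn.continuousAt
    (Metric.ball_mem_nhds (0:ℂ) one_pos)
  have e : Eu 0 = 1 := by simp [Eu]
  have : Tendsto Eu (𝓝 0) (𝓝 (Eu 0)) := h
  rwa [e] at this

lemma Eu_inv_bound : ∃ δ > 0, ∀ q : ℂ, ‖q‖ < δ → ‖(Eu q)⁻¹‖ ≤ 2 := by
  have h := (Eu_tendsto_zero.inv₀ one_ne_zero).norm
  simp only [inv_one, norm_one] at h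
  have := h.eventually (ge_mem_nhds (by norm_num : (1:ℝ) < 2))
  obtain ⟨δ, hδ, H⟩ := Metric.eventually_nhds_iff.mp this
  exact ⟨δ, hδ, fun q hq => H (by simpa using hq)⟩

end

section
open Finset
open Filter Topology

/-- second difference -/
noncomputable def hdiff (s : ℂ) (r : ℕ) : ℂ :=
  Complex.exp (-s) ^ ((r+1).choose 2) * ((1 - Complex.exp (-s * (r+1))) ^ 2 - Complex.exp (-s * (r+1)) ^ 2 * (1 - Complex.exp (-s)))

lemma norm_one_sub_exp {z : ℂ} (hz : 0 ≤ z.re) : ‖1 - Complex.exp (-z)‖ ≤ ‖z‖ := by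
  have h : ∀ w ∈ {w : ℂ | w.re ≤ 0}, HasDerivWithinAt Complex.exp (Complex.exp w) {w : ℂ | w.re ≤ 0} w :=
    fun w _ => (Complex.hasDerivAt_exp w).hasDerivWithinAt
  have := Convex.norm_image_sub_le_of_norm_hasDerivWithin_le (C := 1) h (fun w hw => by
    rw [Complex.norm_exp]; exact Real.exp_le_one_iff.mpr hw) (convex_halfSpace_re_le 0)
    (x := -z) (y := 0) (by simpa using hz) (by simp)
  simpa using this

lemma choose_lower (r : ℕ) : ((r:ℝ)+1)^2/4 - 1/4 ≤ ((r+1).choose 2 : ℝ) := by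
  rw [Nat.cast_choose_two]
  push_cast
  nlinarith [sq_nonneg (r:ℝ)]

lemma exp_poly {y : ℝ} (hy : 0 ≤ y) : Real.exp (-(y/4)) * ((4 * y + 2) * y) ≤ 128 := by
  have h1 : 1 + y/4 + (y/4)^2/2 ≤ Real.exp (y/4) := Real.quadratic_le_exp_of_nonneg (by positivity)
  rw [Real.exp_neg, inv_mul_le_iff₀ (Real.exp_pos _)]
  nlinarith [sq_nonneg y]

lemma hdiff_bound {s : ℂ} (hs : 0 < s.re) (hs1 : s.re ≤ 1) (hsec : ‖s‖ ≤ 2 * s.re) (r : ℕ) :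
    ‖hdiff s r‖ ≤ 256 / ((r:ℝ)+1)^2 := by
  set t := s.re with ht
  set m : ℝ := (r:ℝ)+1 with hm
  have hm1 : 1 ≤ m := by rw [hm]; linarith [Nat.cast_nonneg (α := ℝ) r]
  have hre : (s * (r+1)).re = t * m := by
    have : s * ((r:ℂ)+1) = s * ((m:ℝ):ℂ) := by rw [hm]; push_cast; ring
    rw [this, Complex.re_mul_ofReal]
  have hnm : ‖s * ((r:ℂ)+1)‖ = ‖s‖ * m := by
    have : s * ((r:ℂ)+1) = s * ((m:ℝ):ℂ) := by rw [hm]; push_cast; ring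
    rw [this, norm_mul, Complex.norm_real, Real.norm_of_nonneg (by positivity)]
  have ha : ‖Complex.exp (-s * (r+1))‖ ≤ 1 := by
    rw [neg_mul, Complex.norm_exp, Complex.neg_re, hre]
    exact Real.exp_le_one_iff.mpr (by have := mul_pos hs (by linarith : 0 < m); linarith)
  have h1 : ‖1 - Complex.exp (-s * (r+1))‖ ≤ 2 * t * m := by
    rw [neg_mul]
    refine (norm_one_sub_exp (by rw [hre]; positivity)).trans ?_
    rw [hnm]; gcongr
  have h2 : ‖1 - Complex.exp (-s)‖ ≤ 2 * t := (norm_one_sub_exp hs.le).trans hsec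
  have h3 : ‖Complex.exp (-s) ^ ((r+1).choose 2)‖ ≤ 2 * Real.exp (-(t * m^2/4)) := by
    rw [norm_pow, Complex.norm_exp, Complex.neg_re, ← Real.exp_nat_mul, ← ht]
    have : ((r+1).choose 2 : ℝ) * -t ≤ 1/4 + -(t*m^2/4) := by
      have := mul_le_mul_of_nonneg_right (choose_lower r) hs.le
      rw [← hm] at this
      nlinarith
    refine (Real.exp_le_exp.mpr this).trans ?_
    rw [Real.exp_add]
    gcongr
    have : Real.exp (1/4) ≤ Real.exp 1 ^ (1/4 : ℝ) := by rw [← Real.exp_mul]; norm_num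
    have h5 := Real.exp_one_lt_d9
    have h6 : Real.exp (1/4) ^ 4 = Real.exp 1 := by rw [← Real.exp_nat_mul]; norm_num
    by_contra hc
    push Not at hc
    have : (2:ℝ)^4 < Real.exp (1/4) ^ 4 := by gcongr
    rw [h6] at this
    linarith
  have h4 : ‖(1 - Complex.exp (-s * (r+1))) ^ 2 - Complex.exp (-s * (r+1)) ^ 2 * (1 - Complex.exp (-s))‖ ≤ 4*t*(t*m^2) + 2*t := by
    refine (norm_sub_le _ _).trans ?_
    rw [norm_pow, norm_mul, norm_pow]
    have e1 : ‖1 - Complex.exp (-s * (r+1))‖ ^ 2 ≤ (2*t*m)^2 := by gcongr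
    have e2 : ‖Complex.exp (-s * (r+1))‖ ^ 2 * ‖1 - Complex.exp (-s)‖ ≤ 1 ^ 2 * (2*t) := by gcongr
    nlinarith
  unfold hdiff
  rw [norm_mul]
  have hy := exp_poly (y := t * m^2) (by positivity)
  calc _ ≤ (2 * Real.exp (-(t * m^2/4))) * (4*t*(t*m^2) + 2*t) := by gcongr
    _ = 2 * (Real.exp (-(t * m^2/4)) * ((4 * (t*m^2) + 2) * (t*m^2))) / m^2 := by
        field_simp
    _ ≤ 2 * 128 / m^2 := by gcongr
    _ = _ := by norm_num

lemma summable_bd : Summable fun r : ℕ => 256 / ((r:ℝ)+1)^2 := by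
  have := (summable_nat_add_iff 1).mpr (Real.summable_one_div_nat_pow.mpr (by norm_num : 1 < 2))
  have := this.mul_left 256
  refine this.congr fun r => ?_
  push_cast
  ring

lemma Th_summable {q : ℂ} (hq : ‖q‖ < 1) : Summable fun k : ℕ => ‖(-1) ^ k * q ^ ((k + 1).choose 2)‖ := by
  refine Summable.of_nonneg_of_le (fun _ => norm_nonneg _) (fun k => ?_)
    (summable_geometric_of_lt_one (norm_nonneg _) hq)
  simp only [norm_mul, norm_pow, norm_neg, norm_one, one_pow, one_mul]
  apply pow_le_pow_of_le_one (norm_nonneg _) hq.le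
  rw [Nat.choose_succ_succ' k 1]; simp

lemma Th_bound_triv {q : ℂ} (hq : ‖q‖ < 1) : ‖Th q‖ ≤ (1 - ‖q‖)⁻¹ := by
  rw [← tsum_geometric_of_lt_one (norm_nonneg _) hq]
  refine (norm_tsum_le_tsum_norm (Th_summable hq)).trans ?_
  refine (Th_summable hq).tsum_le_tsum (fun k => ?_) (summable_geometric_of_lt_one (norm_nonneg _) hq)
  simp only [norm_mul, norm_pow, norm_neg, norm_one, one_pow, one_mul]
  apply pow_le_pow_of_le_one (norm_nonneg _) hq.le
  rw [Nat.choose_succ_succ' k 1]; simp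

lemma Th_eq {s : ℂ} (hs : 0 < s.re) :
    Th (Complex.exp (-s)) = (3 - Complex.exp (-s) + ∑' r : ℕ, (-1) ^ r * hdiff s r) / 4 := by
  set q := Complex.exp (-s) with hqd
  have hq : ‖q‖ < 1 := by rw [hqd, Complex.norm_exp]; simpa using hs
  have s0 := (Th_summable hq).of_norm
  have s1 := (summable_nat_add_iff 1).mpr s0
  have s2 := (summable_nat_add_iff 2).mpr s0
  have t1 : Th q = 1 + ∑' k : ℕ, (-1) ^ (k+1) * q ^ ((k+1+1).choose 2) := by
    unfold Th; rw [s0.tsum_eq_zero_add]; simp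
  have t2 : Th q = 1 - q + ∑' k : ℕ, (-1) ^ (k+2) * q ^ ((k+2+1).choose 2) := by
    rw [t1, s1.tsum_eq_zero_add]; simp; ring
  have e : ∀ r : ℕ, (-1) ^ r * hdiff s r = (-1) ^ r * q ^ ((r + 1).choose 2)
      + 2 * ((-1) ^ (r+1) * q ^ ((r+1+1).choose 2)) + (-1) ^ (r+2) * q ^ ((r+2+1).choose 2) := fun r => by
    have c1 : (r+1+1).choose 2 = (r+1) + (r+1).choose 2 := by rw [Nat.choose_succ_succ' (r+1) 1]; simp
    have c2 : (r+2+1).choose 2 = (r+2) + ((r+1) + (r+1).choose 2) := by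
      rw [Nat.choose_succ_succ' (r+2) 1, c1.symm]; simp
    have c3 : Complex.exp (-s * (r+1)) = q ^ (r+1) := by
      rw [hqd, ← Complex.exp_nat_mul]; congr 1; push_cast; ring
    rw [c1, c2, hdiff, c3, ← hqd]
    ring
  have : ∑' r : ℕ, (-1) ^ r * hdiff s r = Th q + 2 * (Th q - 1) + (Th q - 1 + q) := by
    simp only [e]
    rw [(s0.add (s1.mul_left 2)).tsum_add s2, s0.tsum_add (s1.mul_left 2), tsum_mul_left]
    nth_rewrite 2 [t1]
    nth_rewrite 2 [t2]
    unfold Th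
    ring
  rw [this]
  ring

lemma Th_bound : ∃ C : ℝ, ∀ s : ℂ, 0 < s.re → s.re ≤ 1 → ‖s‖ ≤ 2 * s.re → ‖Th (Complex.exp (-s))‖ ≤ C := by
  refine ⟨(3 + 1 + ∑' r : ℕ, 256 / ((r:ℝ)+1)^2)/4, fun s hs hs1 hsec => ?_⟩
  have hq : ‖Complex.exp (-s)‖ ≤ 1 := by rw [Complex.norm_exp]; simpa using hs.le
  rw [Th_eq hs, norm_div]
  have h : ‖∑' r : ℕ, (-1) ^ r * hdiff s r‖ ≤ ∑' r : ℕ, 256 / ((r:ℝ)+1)^2 :=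
    tsum_of_norm_bounded summable_bd.hasSum fun r => by
      simpa using hdiff_bound hs hs1 hsec r
  rw [show ‖(4:ℂ)‖ = 4 by simp]
  gcongr
  refine (norm_add_le _ _).trans (add_le_add ((norm_sub_le _ _).trans ?_) h)
  simp only [Complex.norm_ofNat]
  linarith

lemma Th_tendsto {α : Type*} {l : Filter α} {s : α → ℂ} (h0 : Tendsto s l (𝓝 0))
    (h1 : ∀ᶠ a in l, 0 < (s a).re) (h2 : ∀ᶠ a in l, ‖s a‖ ≤ 2 * (s a).re) :
    Tendsto (fun a => Th (Complex.exp (-(s a)))) l (𝓝 (1/2)) := by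
  have h3 : ∀ᶠ a in l, (s a).re ≤ 1 := by
    have := (Complex.continuous_re.tendsto 0).comp h0
    exact this.eventually (ge_mem_nhds (by simp))
  have e : (fun a => (3 - Complex.exp (-(s a)) + ∑' r : ℕ, (-1) ^ r * hdiff (s a) r) / 4) =ᶠ[l]
    fun a => Th (Complex.exp (-(s a))) := h1.mono fun a ha => (Th_eq ha).symm
  refine Tendsto.congr' e ?_
  have hsum : Tendsto (fun a => ∑' r : ℕ, (-1) ^ r * hdiff (s a) r) l (𝓝 (∑' r : ℕ, (0:ℂ))) := by
    refine tendsto_tsum_of_dominated_convergence summable_bd (fun r => ?_) ?_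
    · have hc : Continuous fun s : ℂ => (-1) ^ r * hdiff s r := by unfold hdiff; fun_prop
      have := (hc.tendsto 0).comp h0
      simpa [hdiff] using! this
    · filter_upwards [h1, h2, h3] with a a1 a2 a3 r
      simpa using hdiff_bound a1 a3 a2 r
  have hexp : Tendsto (fun a => Complex.exp (-(s a))) l (𝓝 1) := by
    have hc : Continuous fun s : ℂ => Complex.exp (-s) := by fun_prop
    simpa using! (hc.tendsto 0).comp h0
  have := ((hexp.const_sub 3).add hsum).div_const 4
  convert this using 2
  simp; norm_num

end

section
open Finset
open Filter Topology

lemma fac_bound {z : ℂ} (hz : ‖z‖ < 1) : ‖(1 - z)⁻¹‖ ≤ (1 - ‖z‖)⁻¹ * Real.exp (z.re - ‖z‖) := by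
  have h1 := Complex.hasSum_re (Complex.hasSum_taylorSeries_neg_log hz)
  have h2 := Complex.hasSum_re (Complex.hasSum_taylorSeries_neg_log (z := ((‖z‖:ℝ):ℂ)) (by simpa using hz))
  have h3 := h2.sub h1
  have h4 := le_hasSum h3 1 (fun n _ => by
    have e : (((‖z‖:ℝ):ℂ) ^ n / n).re = ‖z ^ n / n‖ := by
      rw [← Complex.ofReal_pow, ← Complex.ofReal_natCast, ← Complex.ofReal_div, Complex.ofReal_re]
      simp
    rw [e, sub_nonneg]
    exact Complex.re_le_norm _)
  have hp : 0 < 1 - ‖z‖ := by linarith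
  have hne : 0 < ‖1 - z‖ := by
    rw [norm_pos_iff, sub_ne_zero]; rintro rfl; simp at hz
  have e2 : (Complex.log (1 - ((‖z‖:ℝ):ℂ))).re = Real.log (1 - ‖z‖) := by
    rw [Complex.log_re, ← Complex.ofReal_one, ← Complex.ofReal_sub, Complex.norm_real, Real.norm_of_nonneg hp.le]
  simp only [pow_one, Nat.cast_one, div_one, Complex.neg_re, Complex.log_re, Complex.ofReal_re] at h4
  rw [← Complex.log_re, e2] at h4
  rw [norm_inv, ← Real.exp_log hne, ← Real.exp_neg]
  have e3 : (1 - ‖z‖)⁻¹ = Real.exp (-Real.log (1 - ‖z‖)) := by rw [Real.exp_neg, Real.exp_log hp]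
  rw [e3, ← Real.exp_add]
  apply Real.exp_le_exp.mpr
  linarith

lemma qp_bound {q : ℂ} (hq : ‖q‖ < 1) (k : ℕ) :
    ‖(qp q k)⁻¹‖ ≤ ‖(qp (‖q‖:ℂ) k)⁻¹‖ * Real.exp (∑ i ∈ range k, ((q^(i+1)).re - ‖q‖^(i+1))) := by
  induction k with
  | zero => simp [qp]
  | succ k ih =>
    have hk : ‖q^(k+1)‖ < 1 := by rw [norm_pow]; exact pow_lt_one₀ (norm_nonneg _) hq (by omega)
    rw [qp_succ, qp_succ, mul_inv, mul_inv, norm_mul, norm_mul, Finset.sum_range_succ, Real.exp_add]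
    have e : ‖(1 - (‖q‖:ℂ)^(k+1))⁻¹‖ = (1 - ‖q^(k+1)‖)⁻¹ := by
      rw [norm_pow, norm_inv, ← Complex.ofReal_pow, ← Complex.ofReal_one, ← Complex.ofReal_sub,
        Complex.norm_real, Real.norm_of_nonneg]
      rw [← norm_pow]; linarith
    have := mul_le_mul ih (fac_bound hk) (norm_nonneg _) (by positivity)
    rw [e]
    refine this.trans (le_of_eq ?_)
    rw [norm_pow]; ring

lemma Eu_bound {q : ℂ} (hq : ‖q‖ < 1) :
    ‖(Eu q)⁻¹‖ ≤ ‖(Eu (‖q‖:ℂ))⁻¹‖ * Real.exp (‖q‖ / ‖1 - q‖ - ‖q‖ / (1 - ‖q‖)) := by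
  have hr : ‖((‖q‖:ℝ):ℂ)‖ < 1 := by simpa using hq
  have h1 := ((qp_tendsto hq).inv₀ (Eu_ne hq)).norm
  have h2 := ((qp_tendsto hr).inv₀ (Eu_ne hr)).norm
  have g1 := (Complex.hasSum_re ((hasSum_geometric_of_norm_lt_one hq).mul_left q)).tendsto_sum_nat
  have g2 := ((hasSum_geometric_of_lt_one (norm_nonneg _) hq).mul_left ‖q‖).tendsto_sum_nat
  have g3 := (Real.continuous_exp.tendsto _).comp (g1.sub g2)
  have := le_of_tendsto_of_tendsto' h1 (h2.mul g3) (fun k => by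
    refine (qp_bound hq k).trans (le_of_eq ?_)
    simp only [Function.comp, ← Finset.sum_sub_distrib, pow_succ'])
  refine this.trans ?_
  gcongr
  · refine (Complex.re_le_norm _).trans (le_of_eq ?_)
    rw [norm_mul, norm_inv, div_eq_mul_inv]
  · rw [div_eq_mul_inv]

lemma Eu_bound' {q : ℂ} (hq : ‖q‖ < 1) : ‖(Eu q)⁻¹‖ ≤ ‖(Eu (‖q‖:ℂ))⁻¹‖ := by
  refine (Eu_bound hq).trans (mul_le_of_le_one_right (norm_nonneg _) (Real.exp_le_one_iff.mpr ?_))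
  have : 1 - ‖q‖ ≤ ‖1 - q‖ := by simpa using norm_sub_norm_le (1:ℂ) q
  have hp : 0 < 1 - ‖q‖ := by linarith
  have := div_le_div_of_nonneg_left (norm_nonneg q) hp this
  linarith

lemma prod_bound {q : ℂ} (hq : ‖q‖ < 1) :
    ‖(Eu q ^ 2 * Eu (q ^ 2))⁻¹‖ ≤ ‖(Eu (‖q‖:ℂ) ^ 2 * Eu ((‖q‖:ℂ) ^ 2))⁻¹‖ *
      Real.exp (2 * (‖q‖ / ‖1 - q‖ - ‖q‖ / (1 - ‖q‖))) := by
  have hq2 : ‖q^2‖ < 1 := by rw [norm_pow]; exact pow_lt_one₀ (norm_nonneg _) hq (by omega)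
  have h1 := Eu_bound hq
  have h2 := Eu_bound' hq2
  rw [norm_pow, Complex.ofReal_pow] at h2
  rw [mul_inv, mul_inv, norm_mul, norm_mul, ← inv_pow, ← inv_pow, norm_pow, norm_pow]
  have := mul_le_mul (pow_le_pow_left₀ (norm_nonneg _) h1 2) h2 (norm_nonneg _) (by positivity)
  refine this.trans (le_of_eq ?_)
  rw [mul_pow, ← Real.exp_nat_mul]; push_cast; ring

lemma norm_csqrt (z : ℂ) : ‖Complex.sqrt z‖ = Real.sqrt ‖z‖ := by
  rw [← sqrt_sq' z, norm_pow, Real.sqrt_sq (norm_nonneg _), sqrt_sq']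

lemma norm_e1 {s : ℂ} (hs : 0 < s.re) (hsec : ‖s‖ ≤ 2 * s.re) (a : ℝ) (ha : 4 ≤ a) :
    ‖Complex.exp (-a / s)‖ ≤ s.re := by
  have hs0 : s ≠ 0 := by rintro rfl; simp at hs
  have e : (-(a:ℂ)/s).re = -(a * (s.re / ‖s‖^2)) := by
    rw [div_eq_mul_inv, ← Complex.ofReal_neg, Complex.re_ofReal_mul, Complex.inv_re, Complex.normSq_eq_norm_sq]; ring
  rw [Complex.norm_exp, e, Real.exp_neg]
  have hn : 0 < ‖s‖ := norm_pos_iff.mpr hs0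
  have h1 : (s.re)⁻¹ ≤ a * (s.re / ‖s‖^2) := by
    have h2 : ‖s‖^2 ≤ (2*s.re)^2 := by gcongr
    rw [mul_div_assoc', le_div_iff₀ (by positivity), inv_mul_le_iff₀ hs]
    nlinarith [sq_nonneg s.re]
  have h3 := Real.add_one_le_exp (a * (s.re / ‖s‖^2))
  rw [inv_le_comm₀ (Real.exp_pos _) hs]
  linarith

lemma four_le_pi : (4:ℝ) ≤ 2 * Real.pi^2 := by nlinarith [Real.pi_gt_three]

lemma Er_norms {s : ℂ} (hs : 0 < s.re) (hsec : ‖s‖ ≤ 2 * s.re) :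
    ‖Complex.exp (-4 * Real.pi ^ 2 / s)‖ ≤ s.re ∧ ‖Complex.exp (-4 * Real.pi ^ 2 / (2 * s))‖ ≤ s.re := by
  constructor
  · have := norm_e1 hs hsec (4 * Real.pi^2) (by linarith [four_le_pi, sq_nonneg Real.pi])
    convert this using 3; push_cast; ring
  · have := norm_e1 hs hsec (2 * Real.pi^2) four_le_pi
    have hs0 : s ≠ 0 := by rintro rfl; simp at hs
    convert this using 3; push_cast; field_simp; ring

lemma Er_bound : ∃ δ > 0, ∀ s : ℂ, 0 < s.re → s.re < δ → ‖s‖ ≤ 2 * s.re → ‖Er s‖ ≤ 8 := by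
  obtain ⟨δ, hδ, H⟩ := Eu_inv_bound
  refine ⟨δ, hδ, fun s hs h1 h2 => ?_⟩
  obtain ⟨a1, a2⟩ := Er_norms hs h2
  have b1 := H _ (a1.trans_lt h1)
  have b2 := H _ (a2.trans_lt h1)
  rw [Er, norm_mul, norm_pow]
  calc _ ≤ (2:ℝ)^2*2 := by gcongr
    _ = 8 := by norm_num

lemma Er_tendsto {α : Type*} {l : Filter α} {s : α → ℂ} (h0 : Tendsto s l (𝓝 0))
    (h1 : ∀ᶠ a in l, 0 < (s a).re) (h2 : ∀ᶠ a in l, ‖s a‖ ≤ 2 * (s a).re) :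
    Tendsto (fun a => Er (s a)) l (𝓝 1) := by
  have h3 : Tendsto (fun a => (s a).re) l (𝓝 0) := by
    simpa using! (Complex.continuous_re.tendsto 0).comp h0
  have t1 : Tendsto (fun a => Complex.exp (-4 * Real.pi ^ 2 / s a)) l (𝓝 0) :=
    squeeze_zero_norm' (by filter_upwards [h1, h2] with a a1 a2 using (Er_norms a1 a2).1) h3
  have t2 : Tendsto (fun a => Complex.exp (-4 * Real.pi ^ 2 / (2 * s a))) l (𝓝 0) :=
    squeeze_zero_norm' (by filter_upwards [h1, h2] with a a1 a2 using (Er_norms a1 a2).2) h3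
  have := (((Eu_tendsto_zero.comp t1).inv₀ one_ne_zero).pow 2).mul ((Eu_tendsto_zero.comp t2).inv₀ one_ne_zero)
  simp only [inv_one, one_pow, mul_one] at this
  exact this

lemma real_bound : ∃ δ > 0, ∀ t : ℝ, 0 < t → t < δ →
    ‖(Eu (Complex.exp (-t)) ^ 2 * Eu (Complex.exp (-t) ^ 2))⁻¹‖ ≤ 8 * Real.exp (cA / t) := by
  obtain ⟨δ, hδ, H⟩ := Er_bound
  refine ⟨min δ 1, by positivity, fun t ht h => ?_⟩
  have h8 := H t (by simpa) (by simpa using h.trans_le (min_le_left _ _)) (by simp [abs_of_pos ht]; linarith)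
  have ht1 : t < 1 := h.trans_le (min_le_right _ _)
  have hpi := Real.pi_gt_three
  rw [prod_transform (by simpa using ht)]
  simp only [norm_mul, norm_div, norm_csqrt, Complex.norm_I, Real.sqrt_one, div_one, one_mul, Complex.norm_real,
    Complex.norm_ofNat, Real.norm_of_nonneg ht.le, Real.norm_of_nonneg Real.pi_pos.le]
  have e1 : ‖Complex.exp (-t/6)‖ ≤ 1 := by
    rw [Complex.norm_exp, Real.exp_le_one_iff]
    have : (-(t:ℂ)/6) = ((-t/6 : ℝ):ℂ) := by push_cast; ring
    rw [this, Complex.ofReal_re]; linarith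
  have e2 : ‖Complex.exp (cA/t)‖ = Real.exp (cA/t) := by
    rw [← Complex.ofReal_div, Complex.norm_exp, Complex.ofReal_re]
  rw [e2]
  have e3 : t / (2*Real.pi) ≤ 1 := by rw [div_le_one (by positivity)]; linarith
  have e4 : Real.sqrt (t / Real.pi) ≤ 1 := by
    rw [Real.sqrt_le_one, div_le_one (by positivity)]; linarith
  calc _ ≤ 1 * 1 * 1 * Real.exp (cA/t) * 8 := by gcongr
    _ = _ := by ring

lemma norm_one_sub_q {t θ : ℝ} (ht : 0 < t) (ht1 : t ≤ 1/10) (h1 : t ≤ |θ|) (h2 : |θ| ≤ Real.pi) :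
    1.1 * (1 - Real.exp (-t)) ≤ ‖1 - Complex.exp (-t + θ * Complex.I)‖ := by
  set r := Real.exp (-t) with hr
  have hr1 : 1 - t ≤ r := by have := Real.add_one_le_exp (-t); linarith
  have hr0 : r < 1 := by rw [hr]; exact Real.exp_lt_one_iff.mpr (by linarith)
  have hq : Complex.exp (-t + θ * Complex.I) = r * Complex.exp (θ * Complex.I) := by
    rw [Complex.exp_add, hr]; push_cast; rfl
  have hn : ‖1 - Complex.exp (-t + θ * Complex.I)‖^2 = (1-r)^2 + 4*r*(Real.sin (|θ|/2))^2 := by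
    rw [hq, Complex.exp_mul_I, ← Complex.ofReal_cos, ← Complex.ofReal_sin, ← Complex.normSq_eq_norm_sq, Complex.normSq_apply]
    simp only [Complex.sub_re, Complex.one_re, Complex.re_ofReal_mul, Complex.add_re, Complex.ofReal_re, Complex.mul_re,
      Complex.I_re, mul_zero, Complex.ofReal_im, zero_mul, sub_zero, Complex.sub_im, Complex.one_im, Complex.im_ofReal_mul,
      Complex.add_im, Complex.mul_im, Complex.I_im, mul_one, add_zero, zero_add, zero_sub, zero_mul, sub_self]
    have a1 : Real.cos θ = 1 - 2 * Real.sin (|θ|/2)^2 := by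
      rw [← Real.cos_abs θ]
      have := Real.cos_two_mul (|θ|/2)
      rw [show 2 * (|θ|/2) = |θ| by ring] at this
      have b := Real.sin_sq_add_cos_sq (|θ|/2)
      linarith
    have a2 := Real.sin_sq_add_cos_sq θ
    have : (1 - r * Real.cos θ) * (1 - r * Real.cos θ) + -(r * Real.sin θ) * -(r * Real.sin θ)
       = 1 - 2*r*Real.cos θ + r^2 := by linear_combination r^2 * a2
    rw [this, a1]; ring
  have hs : 2 / Real.pi * (|θ|/2) ≤ Real.sin (|θ|/2) := Real.mul_le_sin (by positivity) (by linarith)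
  have hpi := Real.pi_lt_d2
  have hpi0 := Real.pi_pos
  have hs2 : t / 3.15 ≤ Real.sin (|θ|/2) := by
    refine le_trans ?_ hs
    rw [show 2 / Real.pi * (|θ|/2) = |θ|/Real.pi by ring]
    gcongr
  have hs3 : (t/3.15)^2 ≤ Real.sin (|θ|/2)^2 := by gcongr
  refine le_of_sq_le_sq ?_ (norm_nonneg _)
  rw [hn]
  have : (1-r)^2 ≤ t^2 := by nlinarith
  have h9 : 0.9 ≤ r := by linarith
  have : 4 * 0.9 * (t/3.15)^2 ≤ 4 * r * Real.sin (|θ|/2)^2 := by gcongr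
  generalize 4 * r * Real.sin (|θ|/2)^2 = Y at *
  norm_num at this ⊢
  nlinarith [sq_nonneg t]

lemma minor_bound : ∃ δ > 0, ∀ t : ℝ, 0 < t → t < δ → ∀ θ : ℝ, t ≤ |θ| → |θ| ≤ Real.pi →
    ‖Fq (Complex.exp (-t + θ * Complex.I))‖ ≤ 16 / t * Real.exp (cA / t) * Real.exp (-(1/(11*t))) := by
  obtain ⟨δ, hδ, H⟩ := real_bound
  refine ⟨min δ (1/10), by positivity, fun t ht h θ h1 h2 => ?_⟩
  have hR := H t ht (h.trans_le (min_le_left _ _))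
  have ht1 : t ≤ 1/10 := (h.trans_le (min_le_right _ _)).le
  have hq1 := norm_one_sub_q ht ht1 h1 h2
  set q := Complex.exp (-t + θ * Complex.I) with hq
  set r := Real.exp (-t) with hr
  have hr1 : 1 - t ≤ r := by have := Real.add_one_le_exp (-t); linarith
  have hr0 : r < 1 := by rw [hr]; exact Real.exp_lt_one_iff.mpr (by linarith)
  have hrp : 0 < r := Real.exp_pos _
  have hqn : ‖q‖ = r := by rw [hq, Complex.norm_exp]; simp [hr]
  have hqlt : ‖q‖ < 1 := by rwa [hqn]
  have hP := prod_bound hqlt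
  have hT := Th_bound_triv hqlt
  rw [hqn] at hP hT
  have hrc : (r:ℂ) = Complex.exp (-t) := by rw [hr]; push_cast; rfl
  rw [hrc] at hP
  -- (1 - r) bounds
  have hrt : r⁻¹ - 1 ≤ 2 * t := by
    rw [hr, ← Real.exp_neg, neg_neg]
    have := Real.abs_exp_sub_one_le (x := t) (by rw [abs_of_pos ht]; linarith)
    rw [abs_of_pos ht] at this
    exact (le_abs_self _).trans this
  have hlow : 1/(2*t) ≤ r / (1 - r) := by
    rw [div_le_div_iff₀ (by positivity) (by linarith)]
    have : r * (r⁻¹ - 1) ≤ r * (2*t) := by gcongr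
    rw [mul_sub, mul_inv_cancel₀ hrp.ne'] at this
    linarith
  have hT2 : (1-r)⁻¹ ≤ 2/t := by
    have h5 : r/(1-r) = (1-r)⁻¹ - 1 := by field_simp [show (1 - r) ≠ 0 by linarith]; ring
    have : t / 2 ≤ 1 - r := by
      have : r * (1 + t) ≤ 1 := by
        have := Real.add_one_le_exp t
        have h6 : r * Real.exp t = 1 := by rw [hr, ← Real.exp_add]; simp
        nlinarith
      nlinarith
    calc _ ≤ (t/2)⁻¹ := by gcongr
      _ = _ := by rw [inv_div]
  have hE : 2 * (r / ‖1 - q‖ - r / (1 - r)) ≤ -(1/(11*t)) := by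
    have : r / ‖1 - q‖ ≤ r / (1.1 * (1 - r)) := by
      gcongr
    have e : r / (1.1 * (1-r)) = (10/11) * (r/(1-r)) := by
      field_simp [show (1 - r) ≠ 0 by linarith]; norm_num
    have e2 : 1/(11*t) = 2/11 * (1/(2*t)) := by field_simp
    rw [e2]; linarith
  rw [Fq, div_eq_mul_inv, norm_mul]
  calc _ ≤ (2/t) * ((8 * Real.exp (cA / t)) * Real.exp (-(1/(11*t)))) := by
        gcongr
        · exact hT.trans hT2
        · exact hP.trans (by gcongr)
    _ = _ := by ring

end

section
open Finset
open Filter Topology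

lemma csqrt_real_mul {a : ℝ} (ha : 0 < a) (z : ℂ) : Complex.sqrt (a * z) = Real.sqrt a * Complex.sqrt z := by
  rcases eq_or_ne z 0 with rfl | hz
  · simp [Complex.sqrt]
  have haz : (a:ℂ) ≠ 0 := by exact_mod_cast ha.ne'
  simp only [Complex.sqrt]
  rw [Complex.cpow_def_of_ne_zero (mul_ne_zero haz hz), Complex.cpow_def_of_ne_zero hz, Complex.log_ofReal_mul ha hz,
    add_mul, Complex.exp_add]
  congr 1
  rw [Real.sqrt_eq_rpow, Real.rpow_def_of_pos ha]
  push_cast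
  rw [one_div]

/-- the rotated variable -/
noncomputable def om (τ v : ℝ) : ℂ := 1 - τ * v * Complex.I
/-- the complex variable s -/
noncomputable def sv (τ v : ℝ) : ℂ := ((τ ^ 2 : ℝ) : ℂ) * om τ v
/-- normalised integrand -/
noncomputable def G (τ v : ℝ) : ℂ :=
  Fq (Complex.exp (-(sv τ v))) * Complex.exp (cA / τ ^ 2 * (om τ v - 2)) / τ ^ 3

lemma om_re (τ v : ℝ) : (om τ v).re = 1 := by
  simp [om, ← Complex.ofReal_mul]
lemma om_im (τ v : ℝ) : (om τ v).im = -(τ * v) := by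
  simp [om, ← Complex.ofReal_mul]
lemma om_ne (τ v : ℝ) : om τ v ≠ 0 := by
  intro h
  have := om_re τ v
  rw [h] at this; simp at this
lemma sv_re (τ v : ℝ) : (sv τ v).re = τ ^ 2 := by
  rw [sv, Complex.re_ofReal_mul, om_re, mul_one]

lemma G_eq {τ : ℝ} (hτ : 0 < τ) (v : ℝ) :
    G τ v = Th (Complex.exp (-(sv τ v))) * (om τ v / (2 * Real.pi)) *
      (Complex.sqrt (Complex.I * om τ v / Real.pi) / Complex.sqrt Complex.I) *
      Complex.exp (-(sv τ v) / 6) * Complex.exp (-(cA * v ^ 2) / om τ v) * Er (sv τ v) := by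
  have hs : 0 < (sv τ v).re := by rw [sv_re]; positivity
  have hτ0 : (τ:ℂ) ≠ 0 := by exact_mod_cast hτ.ne'
  have hom := om_ne τ v
  rw [G, Fq, div_eq_mul_inv (Th _), prod_transform hs]
  have e1 : Complex.sqrt (Complex.I * sv τ v / Real.pi) = τ * Complex.sqrt (Complex.I * om τ v / Real.pi) := by
    rw [sv, show Complex.I * (((τ^2:ℝ):ℂ) * om τ v) / Real.pi = ((τ^2:ℝ):ℂ) * (Complex.I * om τ v / Real.pi) by ring,
      csqrt_real_mul (by positivity), Real.sqrt_sq hτ.le]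
  have e2 : Complex.exp (-(cA * v ^ 2) / om τ v) = Complex.exp (cA / sv τ v) * Complex.exp (cA / τ ^ 2 * (om τ v - 2)) := by
    rw [← Complex.exp_add]
    congr 1
    have hI : (om τ v - 1) ^ 2 = - (τ ^ 2 * v ^ 2) := by
      rw [om]; linear_combination (τ ^ 2 * v ^ 2 : ℂ) * Complex.I_sq
    rw [sv]; push_cast
    field_simp
    linear_combination -(cA : ℂ) * hI
  rw [e1, e2]
  nth_rewrite 2 [sv]
  push_cast
  field_simp

lemma om_tendsto (v : ℝ) : Tendsto (fun τ : ℝ => om τ v) (𝓝[>] 0) (𝓝 1) := by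
  have hc : Continuous fun τ : ℝ => om τ v := by unfold om; fun_prop
  have := (hc.tendsto 0).mono_left (nhdsWithin_le_nhds (s := Set.Ioi 0))
  simpa [om] using this

lemma sv_tendsto (v : ℝ) : Tendsto (fun τ : ℝ => sv τ v) (𝓝[>] 0) (𝓝 0) := by
  have hc : Continuous fun τ : ℝ => sv τ v := by unfold sv om; fun_prop
  have := (hc.tendsto 0).mono_left (nhdsWithin_le_nhds (s := Set.Ioi 0))
  simpa [sv, om] using this

lemma om_norm {τ v : ℝ} (h : |τ * v| ≤ 1) : ‖om τ v‖ ≤ 2 := by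
  refine (Complex.norm_le_abs_re_add_abs_im _).trans ?_
  rw [om_re, om_im, abs_neg, abs_one]; linarith

lemma sv_norm {τ v : ℝ} (h : |τ * v| ≤ 1) : ‖sv τ v‖ ≤ 2 * (sv τ v).re := by
  rw [sv_re, sv, norm_mul, Complex.norm_real, Real.norm_of_nonneg (by positivity), mul_comm]
  gcongr
  exact om_norm h

lemma ev_small (v : ℝ) : ∀ᶠ τ : ℝ in 𝓝[>] 0, |τ * v| ≤ 1 := by
  have hc : Continuous fun τ : ℝ => |τ * v| := by fun_prop
  have := (hc.tendsto 0).mono_left (nhdsWithin_le_nhds (s := Set.Ioi 0))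
  exact this.eventually (ge_mem_nhds (by simp))

lemma G_tendsto (v : ℝ) : Tendsto (fun τ => G τ v) (𝓝[>] 0)
    (𝓝 (((1 / (4 * Real.pi * Real.sqrt Real.pi) * Real.exp (-cA * v ^ 2) : ℝ) : ℂ))) := by
  have h1 : ∀ᶠ τ : ℝ in 𝓝[>] 0, 0 < (sv τ v).re := by
    filter_upwards [self_mem_nhdsWithin] with τ hτ
    rw [sv_re]; have : 0 < τ := hτ
    positivity
  have h2 : ∀ᶠ τ : ℝ in 𝓝[>] 0, ‖sv τ v‖ ≤ 2 * (sv τ v).re := (ev_small v).mono fun τ h => sv_norm h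
  have t1 := Th_tendsto (sv_tendsto v) h1 h2
  have t2 := Er_tendsto (sv_tendsto v) h1 h2
  have t3 := om_tendsto v
  have hpi : (Real.pi:ℂ) ≠ 0 := by exact_mod_cast Real.pi_ne_zero
  have hsI : Complex.sqrt Complex.I ≠ 0 := by simp [Complex.sqrt]
  have t4 : Tendsto (fun τ : ℝ => Complex.sqrt (Complex.I * om τ v / Real.pi)) (𝓝[>] 0)
      (𝓝 (Complex.sqrt (Complex.I * 1 / Real.pi))) := by
    have hc : ContinuousAt Complex.sqrt (Complex.I * 1 / Real.pi) := by
      unfold Complex.sqrt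
      refine continuousAt_cpow_const ?_
      right
      rw [mul_one, div_eq_mul_inv, ← Complex.ofReal_inv, Complex.im_mul_ofReal]
      simp [Real.pi_ne_zero]
    exact hc.tendsto.comp ((t3.const_mul _).div_const _)
  have e4 : Complex.sqrt (Complex.I * 1 / Real.pi) / Complex.sqrt Complex.I = ((Real.sqrt Real.pi)⁻¹ : ℝ) := by
    rw [show Complex.I * 1 / Real.pi = ((Real.pi⁻¹:ℝ):ℂ) * Complex.I by push_cast; ring,
      csqrt_real_mul (inv_pos.mpr Real.pi_pos), Real.sqrt_inv, mul_div_assoc, div_self hsI, mul_one]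
  have t5 : Tendsto (fun τ : ℝ => Complex.exp (-(sv τ v) / 6)) (𝓝[>] 0) (𝓝 1) := by
    have hc : Continuous fun s : ℂ => Complex.exp (-s/6) := by fun_prop
    have := (hc.tendsto 0).comp (sv_tendsto v)
    simpa using! this
  have t6 : Tendsto (fun τ : ℝ => Complex.exp (-(cA * v ^ 2) / om τ v)) (𝓝[>] 0) (𝓝 (Complex.exp (-(cA * v^2)/1))) :=
    (Complex.continuous_exp.tendsto _).comp (tendsto_const_nhds.div t3 one_ne_zero)
  have := ((((t1.mul (t3.div_const (2 * Real.pi))).mul (t4.div_const (Complex.sqrt Complex.I))).mul t5).mul t6).mul t2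
  rw [e4] at this
  refine Tendsto.congr' (f₁ := _) ?_ (this.trans_eq ?_)
  · filter_upwards [self_mem_nhdsWithin] with τ hτ
    exact (G_eq hτ v).symm
  · congr 1
    push_cast
    have hp : ((Real.sqrt Real.pi : ℝ) : ℂ) ≠ 0 := by exact_mod_cast (Real.sqrt_pos.mpr Real.pi_pos).ne'
    rw [div_one, mul_one, mul_one, neg_mul]
    field_simp
    norm_num

lemma cA_ge : 3 ≤ cA := by unfold cA; nlinarith [Real.pi_gt_three]

lemma major_bound : ∃ C : ℝ, ∃ δ > 0, ∀ τ : ℝ, 0 < τ → τ < δ → ∀ v : ℝ, |τ * v| ≤ 1 →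
    ‖G τ v‖ ≤ C * (1 + v ^ 2)⁻¹ := by
  obtain ⟨C, hC⟩ := Th_bound
  obtain ⟨δ, hδ, H⟩ := Er_bound
  refine ⟨8 * max C 0, min (min δ 1) 1, by positivity, fun τ hτ hlt v hv => ?_⟩
  have hτ1 : τ < 1 := hlt.trans_le (min_le_right _ _)
  have hτδ : τ < δ := hlt.trans_le ((min_le_left _ _).trans (min_le_left _ _))
  have hτ2 : τ^2 ≤ τ := by nlinarith
  have hre : 0 < (sv τ v).re := by rw [sv_re]; positivity
  have b1 := hC (sv τ v) hre (by rw [sv_re]; linarith) (sv_norm hv)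
  have b2 := H (sv τ v) hre (by rw [sv_re]; linarith) (sv_norm hv)
  have hpi := Real.pi_gt_three
  rw [G_eq hτ v]
  simp only [norm_mul, norm_div, norm_csqrt, Complex.norm_I, Real.sqrt_one, div_one, one_mul, Complex.norm_real,
    Complex.norm_ofNat, Real.norm_of_nonneg Real.pi_pos.le]
  have e1 : ‖Complex.exp (-(sv τ v)/6)‖ ≤ 1 := by
    rw [Complex.norm_exp, Real.exp_le_one_iff]
    have : (-(sv τ v)/6) = ((-1/6 : ℝ):ℂ) * sv τ v := by push_cast; ring
    rw [this, Complex.re_ofReal_mul]; linarith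
  have e2 : ‖Complex.exp (-(cA * v ^ 2) / om τ v)‖ ≤ (1 + v^2)⁻¹ := by
    rw [Complex.norm_exp]
    have e : (-(cA * v ^ 2) / om τ v).re = -(cA * v^2 * (1 + (τ*v)^2)⁻¹) := by
      have : (-((cA:ℂ) * v ^ 2) / om τ v) = ((-(cA * v^2) : ℝ):ℂ) * (om τ v)⁻¹ := by push_cast; ring
      rw [this, Complex.re_ofReal_mul, Complex.inv_re, om_re, Complex.normSq_apply, om_re, om_im]
      ring
    rw [e, Real.exp_neg]
    have h1 : (τ*v)^2 ≤ 1 := by rw [← sq_abs]; exact pow_le_one₀ (abs_nonneg _) hv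
    have h2 : (1/2:ℝ) ≤ (1 + (τ*v)^2)⁻¹ := by
      rw [one_div]; gcongr; linarith
    have h3 : v^2 ≤ cA * v^2 * (1 + (τ*v)^2)⁻¹ := by
      calc v^2 ≤ 3 * v^2 * (1/2) := by nlinarith [sq_nonneg v]
        _ ≤ _ := by
            have h4 : 3 * v^2 ≤ cA * v^2 := by gcongr; exact cA_ge
            exact mul_le_mul h4 h2 (by norm_num) (by have := cA_ge; positivity)
    gcongr
    have := Real.add_one_le_exp (cA * v^2 * (1 + (τ*v)^2)⁻¹)
    linarith
  have e3 : ‖om τ v‖ / (2 * Real.pi) ≤ 1 := by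
    rw [div_le_one (by positivity)]; have := om_norm hv; linarith
  have e4 : Real.sqrt (‖om τ v‖ / Real.pi) ≤ 1 := by
    rw [Real.sqrt_le_one, div_le_one (by positivity)]; have := om_norm hv; linarith
  have b1' := b1.trans (le_max_left C 0)
  calc _ ≤ max C 0 * 1 * 1 * 1 * (1+v^2)⁻¹ * 8 := by gcongr
    _ = _ := by ring

lemma minor_bound' : ∃ C : ℝ, ∃ δ > 0, ∀ τ : ℝ, 0 < τ → τ < δ → ∀ v : ℝ, 1 ≤ |τ * v| → |τ ^ 3 * v| ≤ Real.pi →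
    ‖G τ v‖ ≤ C * (1 + v ^ 2)⁻¹ := by
  obtain ⟨δ, hδ, H⟩ := minor_bound
  refine ⟨16 * 12 * 720 * 11^6, min δ 1, by positivity, fun τ hτ hlt v hv hv2 => ?_⟩
  have hτ1 : τ < 1 := hlt.trans_le (min_le_right _ _)
  have hτδ : τ < δ := hlt.trans_le (min_le_left _ _)
  have hτ2 : τ^2 ≤ τ := by nlinarith
  have ht : 0 < τ^2 := by positivity
  have h := H (τ^2) ht (by linarith) (τ^3 * v) (by
    rw [show τ^3 * v = τ^2 * (τ * v) by ring, abs_mul, abs_of_pos ht]; nlinarith) hv2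
  have es : Complex.exp (-((τ^2:ℝ):ℂ) + ((τ^3*v:ℝ):ℂ) * Complex.I) = Complex.exp (-(sv τ v)) := by
    congr 1; rw [sv, om]; push_cast; ring
  rw [es] at h
  rw [G, norm_div, norm_mul, norm_pow, Complex.norm_real, Real.norm_of_nonneg hτ.le]
  have e1 : ‖Complex.exp (cA / τ ^ 2 * (om τ v - 2))‖ = Real.exp (-(cA / τ^2)) := by
    rw [Complex.norm_exp]
    have : ((cA:ℂ) / τ ^ 2 * (om τ v - 2)) = ((cA/τ^2 : ℝ):ℂ) * (om τ v - 2) := by push_cast; ring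
    rw [this, Complex.re_ofReal_mul, Complex.sub_re, om_re]
    congr 1
    simp; ring
  rw [e1]
  have hX : Real.exp (-(1/(11*τ^2))) ≤ 720 * 11^6 * τ^12 := by
    have := Real.pow_div_factorial_le_exp (1/(11*τ^2)) (by positivity) 6
    rw [Real.exp_neg, inv_le_comm₀ (Real.exp_pos _) (by positivity)]
    refine le_trans (le_of_eq ?_) this
    norm_num [Nat.factorial]
    field_simp
    norm_num
  have hv3 : 1 + v^2 ≤ 12 / τ^6 := by
    rw [le_div_iff₀ (by positivity)]
    have h1 : (τ^3*v)^2 ≤ Real.pi^2 := by rw [← sq_abs]; gcongr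
    have h2 : Real.pi^2 ≤ 10 := by nlinarith [Real.pi_lt_d2, Real.pi_pos]
    have h3 : τ^6 ≤ 1 := pow_le_one₀ hτ.le hτ1.le
    nlinarith
  have hv4 : τ^6/12 ≤ (1+v^2)⁻¹ := by
    rw [le_inv_comm₀ (by positivity) (by positivity), inv_div]; exact hv3
  calc ‖Fq (Complex.exp (-(sv τ v)))‖ * Real.exp (-(cA / τ^2)) / τ^3
      ≤ (16 / τ^2 * Real.exp (cA / τ^2) * (720 * 11^6 * τ^12)) * Real.exp (-(cA / τ^2)) / τ^3 := by
        gcongr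
        exact h.trans (by gcongr)
    _ = 16 * 720 * 11^6 * τ^7 := by
        rw [Real.exp_neg]; field_simp
    _ ≤ 16 * 720 * 11^6 * τ^6 := by
        gcongr 16 * 720 * 11^6 * ?_
        exact pow_le_pow_of_le_one hτ.le hτ1.le (by norm_num)
    _ = 16 * 12 * 720 * 11^6 * (τ^6/12) := by ring
    _ ≤ _ := by gcongr

lemma G_bound : ∃ C : ℝ, ∃ δ > 0, ∀ τ : ℝ, 0 < τ → τ < δ → ∀ v : ℝ, |τ ^ 3 * v| ≤ Real.pi →
    ‖G τ v‖ ≤ C * (1 + v ^ 2)⁻¹ := by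
  obtain ⟨C1, d1, hd1, H1⟩ := major_bound
  obtain ⟨C2, d2, hd2, H2⟩ := minor_bound'
  refine ⟨max C1 C2, min d1 d2, by positivity, fun τ hτ hlt v hv => ?_⟩
  have hp : 0 ≤ (1 + v^2)⁻¹ := by positivity
  rcases le_total |τ * v| 1 with h | h
  · exact (H1 τ hτ (hlt.trans_le (min_le_left _ _)) v h).trans (mul_le_mul_of_nonneg_right (le_max_left _ _) hp)
  · exact (H2 τ hτ (hlt.trans_le (min_le_right _ _)) v h hv).trans (mul_le_mul_of_nonneg_right (le_max_right _ _) hp)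

end

section
open Finset
open Filter Topology

lemma Th_contOn {r : ℝ} (hr0 : 0 ≤ r) (hr : r < 1) : ContinuousOn Th (Metric.closedBall 0 r) := by
  unfold Th
  refine continuousOn_tsum (u := fun k => r ^ k) (fun k => by fun_prop)
    (summable_geometric_of_lt_one hr0 hr) (fun k q hq => ?_)
  have hq' : ‖q‖ ≤ r := by simpa using hq
  simp only [norm_mul, norm_pow, norm_neg, norm_one, one_pow, one_mul]
  calc ‖q‖ ^ ((k+1).choose 2) ≤ r ^ ((k+1).choose 2) := by gcongr
    _ ≤ r ^ k := pow_le_pow_of_le_one hr0 hr.le (by rw [Nat.choose_succ_succ' k 1]; simp)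

lemma Eu_contAt {q : ℂ} (hq : ‖q‖ < 1) : ContinuousAt Eu q :=
  ModularForm.differentiableOn_tprod_one_sub_pow.continuousOn.continuousAt
    (Metric.isOpen_ball.mem_nhds (by simpa using hq))

lemma G_cont {τ : ℝ} (hτ : 0 < τ) : Continuous (G τ) := by
  have hE : Continuous fun v : ℝ => Complex.exp (-(sv τ v)) := by unfold sv om; fun_prop
  have hn : ∀ v, ‖Complex.exp (-(sv τ v))‖ = Real.exp (-τ^2) := fun v => by
    rw [Complex.norm_exp, Complex.neg_re, sv_re]
  have hr : Real.exp (-τ^2) < 1 := Real.exp_lt_one_iff.mpr (by have : 0 < τ^2 := by positivity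
                                                               linarith)
  have hTh : Continuous fun v : ℝ => Th (Complex.exp (-(sv τ v))) :=
    (Th_contOn (Real.exp_pos _).le hr).comp_continuous hE (fun v => by simp [hn v])
  have hlt : ∀ v, ‖Complex.exp (-(sv τ v))‖ < 1 := fun v => by rw [hn]; exact hr
  have hlt2 : ∀ v, ‖Complex.exp (-(sv τ v)) ^ 2‖ < 1 := fun v => by
    rw [norm_pow]; exact pow_lt_one₀ (norm_nonneg _) (hlt v) (by omega)
  have h1 : Continuous fun v : ℝ => Eu (Complex.exp (-(sv τ v))) :=
    continuous_iff_continuousAt.mpr fun v =>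
      ContinuousAt.comp (f := fun v : ℝ => Complex.exp (-(sv τ v))) (Eu_contAt (hlt v)) hE.continuousAt
  have h2 : Continuous fun v : ℝ => Eu (Complex.exp (-(sv τ v)) ^ 2) :=
    continuous_iff_continuousAt.mpr fun v =>
      ContinuousAt.comp (f := fun v : ℝ => Complex.exp (-(sv τ v)) ^ 2) (Eu_contAt (hlt2 v)) (hE.pow 2).continuousAt
  have hF : Continuous fun v : ℝ => Fq (Complex.exp (-(sv τ v))) := by
    unfold Fq
    exact hTh.div ((h1.pow 2).mul h2) fun v => mul_ne_zero (pow_ne_zero _ (Eu_ne (hlt v))) (Eu_ne (hlt2 v))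
  have h3 : Continuous fun v : ℝ => Complex.exp (cA / τ ^ 2 * (om τ v - 2)) := by unfold om; fun_prop
  unfold G
  exact (hF.mul h3).div_const _

/-- the limiting constant -/
noncomputable def cL : ℝ := 1 / (4 * Real.pi * Real.sqrt Real.pi) * Real.sqrt (Real.pi / cA)

lemma int_tendsto : Tendsto (fun τ : ℝ => ∫ v in (-(Real.pi / τ^3))..(Real.pi / τ^3), G τ v) (𝓝[>] 0) (𝓝 (cL : ℂ)) := by
  obtain ⟨C, δ, hδ, H⟩ := G_bound
  have hpos : ∀ᶠ τ : ℝ in 𝓝[>] 0, 0 < τ := self_mem_nhdsWithin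
  have hlt : ∀ᶠ τ : ℝ in 𝓝[>] 0, τ < δ := (gt_mem_nhds hδ).filter_mono nhdsWithin_le_nhds
  have key := MeasureTheory.tendsto_integral_filter_of_dominated_convergence (μ := MeasureTheory.volume)
    (l := 𝓝[>] (0:ℝ))
    (F := fun τ : ℝ => (Set.Ioc (-(Real.pi / τ^3)) (Real.pi / τ^3)).indicator (G τ))
    (f := fun v : ℝ => (((1 / (4 * Real.pi * Real.sqrt Real.pi) * Real.exp (-cA * v ^ 2) : ℝ) : ℂ)))
    (fun v => |C| * (1 + v^2)⁻¹) ?_ ?_ (integrable_inv_one_add_sq.const_mul _) ?_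
  · have e : ∫ v : ℝ, (((1 / (4 * Real.pi * Real.sqrt Real.pi) * Real.exp (-cA * v ^ 2) : ℝ) : ℂ)) = (cL : ℂ) := by
      rw [integral_complex_ofReal, MeasureTheory.integral_const_mul, integral_gaussian, cL]
    rw [e] at key
    refine key.congr' ?_
    filter_upwards [hpos] with τ hτ
    rw [MeasureTheory.integral_indicator measurableSet_Ioc, intervalIntegral.integral_of_le]
    have : 0 < Real.pi / τ^3 := by have := Real.pi_pos; positivity
    linarith
  · filter_upwards [hpos] with τ hτ
    exact (G_cont hτ).aestronglyMeasurable.indicator measurableSet_Ioc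
  · filter_upwards [hpos, hlt] with τ hτ hτδ
    refine Eventually.of_forall fun v => ?_
    by_cases hv : v ∈ Set.Ioc (-(Real.pi / τ^3)) (Real.pi / τ^3)
    · rw [Set.indicator_of_mem hv]
      have hb : |τ^3 * v| ≤ Real.pi := by
        have h3 : 0 < τ^3 := by positivity
        rw [abs_mul, abs_of_pos h3, ← le_div_iff₀' h3, abs_le]
        exact ⟨hv.1.le, hv.2⟩
      refine (H τ hτ hτδ v hb).trans ?_
      gcongr
      exact le_abs_self C
    · rw [Set.indicator_of_notMem hv]; simp; positivity
  · refine Eventually.of_forall fun v => ?_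
    refine (G_tendsto v).congr' ?_
    have hc : Tendsto (fun τ : ℝ => |τ^3 * v|) (𝓝[>] 0) (𝓝 0) := by
      have hc : Continuous fun τ : ℝ => |τ^3 * v| := by fun_prop
      have := (hc.tendsto 0).mono_left (nhdsWithin_le_nhds (s := Set.Ioi 0))
      simpa using this
    filter_upwards [hpos, hc.eventually (gt_mem_nhds Real.pi_pos)] with τ hτ h
    rw [Set.indicator_of_mem]
    have h3 : 0 < τ^3 := by positivity
    rw [abs_mul, abs_of_pos h3, ← lt_div_iff₀' h3, abs_lt] at h
    exact ⟨h.1, h.2.le⟩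

lemma main_identity {τ : ℝ} (hτ : 0 < τ) (n : ℕ) (hn : n * τ^4 = cA) :
    ((bipartitePi n n / (τ^6 * Real.exp (2 * cA / τ^2)) : ℝ) : ℂ) =
      (1/(2*Real.pi)) * ∫ v in (-(Real.pi / τ^3))..(Real.pi / τ^3), G τ v := by
  have hτ0 : (τ:ℂ) ≠ 0 := by exact_mod_cast hτ.ne'
  have hpi : (Real.pi:ℂ) ≠ 0 := by exact_mod_cast Real.pi_ne_zero
  have h3 : τ^3 ≠ 0 := by positivity
  have ht : 0 < τ^2 := by positivity
  have hcoef := coef_formula (r := Real.exp (-τ^2)) (Real.exp_pos _) (Real.exp_lt_one_iff.mpr (by linarith)) n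
  have hsub := intervalIntegral.smul_integral_comp_mul_left
    (a := -(Real.pi / τ^3)) (b := Real.pi / τ^3) (f := fun θ : ℝ => Fq ((Real.exp (-τ^2) : ℝ) * Complex.exp (θ * Complex.I)) *
      Complex.exp (-(n * θ * Complex.I))) (τ^3)
  rw [show τ^3 * -(Real.pi / τ^3) = -Real.pi by field_simp, show τ^3 * (Real.pi / τ^3) = Real.pi by field_simp, hcoef] at hsub
  have hA : (cA : ℂ) = n * τ^4 := by rw [← hn]; push_cast; rfl
  have hpt : ∀ v : ℝ, Fq ((Real.exp (-τ^2) : ℝ) * Complex.exp ((τ^3 * v : ℝ) * Complex.I)) *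
      Complex.exp (-(n * (τ^3 * v : ℝ) * Complex.I)) = (τ^3 * Complex.exp (cA/τ^2)) * G τ v := fun v => by
    rw [G]
    have e1 : (Real.exp (-τ^2) : ℝ) * Complex.exp ((τ^3 * v : ℝ) * Complex.I) = Complex.exp (-(sv τ v)) := by
      rw [Complex.ofReal_exp, ← Complex.exp_add]; congr 1; rw [sv, om]; push_cast; ring
    have e2 : Complex.exp (-(n * (τ^3 * v : ℝ) * Complex.I)) =
        Complex.exp (cA/τ^2) * Complex.exp (cA / τ ^ 2 * (om τ v - 2)) := by
      rw [← Complex.exp_add]; congr 1; rw [om, hA]; push_cast; field_simp; ring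
    rw [e1, e2]; field_simp
  simp only [hpt] at hsub
  rw [intervalIntegral.integral_const_mul] at hsub
  have er : ((Real.exp (-τ^2) : ℝ) : ℂ)^n = Complex.exp (-(cA/τ^2)) := by
    rw [Complex.ofReal_exp, ← Complex.exp_nat_mul]; congr 1; rw [hA]; push_cast; field_simp
  rw [er, Complex.exp_neg, Complex.real_smul] at hsub
  generalize (∫ v in (-(Real.pi / τ^3))..(Real.pi / τ^3), G τ v) = J at *
  push_cast at hsub ⊢
  have e2 : Complex.exp (2 * cA / τ^2) = Complex.exp (cA/τ^2) * Complex.exp (cA/τ^2) := by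
    rw [← Complex.exp_add]; congr 1; ring
  rw [e2]
  have hE := Complex.exp_ne_zero (cA/τ^2)
  generalize Complex.exp (cA/τ^2) = E at *
  field_simp at hsub ⊢
  linear_combination -hsub


end

open Real Filter in
/-- `π(n,n) ~ (5/96) · e^{c√n}/n^{3/2}` as `n → ∞`, with `c = 2π√(5/12)`. -/
theorem bipartitePi_diag_asymptotic (c : ℝ) (hc : c = 2 * π * Real.sqrt (5 / 12)) :
    Tendsto (fun n : ℕ =>
        (bipartitePi n n : ℝ) /
          (5 / (2 ^ 5 * 3) * Real.exp (c * Real.sqrt n) / (n : ℝ) ^ ((3 : ℝ) / 2)))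
      atTop (nhds 1) := by
  have hA : 0 < cA := by linarith [cA_ge]
  have hcc : c = 2 * Real.sqrt cA := by
    rw [hc, cA, show 5 * Real.pi^2 / 12 = Real.pi^2 * (5/12) by ring, Real.sqrt_mul (by positivity),
      Real.sqrt_sq Real.pi_pos.le]
    ring
  have t0 : Tendsto (fun n : ℕ => Real.sqrt (Real.sqrt (cA / n))) atTop (nhdsWithin 0 (Set.Ioi 0)) := by
    rw [tendsto_nhdsWithin_iff]
    constructor
    · have h1 : Tendsto (fun n : ℕ => cA / (n:ℝ)) atTop (nhds 0) := tendsto_const_div_atTop_nhds_zero_nat cA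
      have h2 : Continuous fun x : ℝ => Real.sqrt (Real.sqrt x) := by fun_prop
      have h3 := (h2.tendsto 0).comp h1
      rw [Real.sqrt_zero, Real.sqrt_zero] at h3
      exact h3
    · filter_upwards [eventually_gt_atTop 0] with n hn
      have : (0:ℝ) < n := by exact_mod_cast hn
      simp only [Set.mem_Ioi]
      positivity
  have t1 := ((int_tendsto.comp t0).const_mul ((1:ℂ)/(2*Real.pi)))
  have t2 := (Complex.continuous_re.tendsto _).comp t1
  have e0 : ((1:ℂ)/(2*Real.pi) * (cL:ℂ)).re = 1/(2*Real.pi) * cL := by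
    rw [show (1:ℂ)/(2*Real.pi) * (cL:ℂ) = ((1/(2*Real.pi) * cL : ℝ) : ℂ) by push_cast; ring, Complex.ofReal_re]
  rw [e0] at t2
  have t3 := t2.const_mul (cA * Real.sqrt cA * 96 / 5)
  have e1 : cA * Real.sqrt cA * 96 / 5 * (1/(2*Real.pi) * cL) = 1 := by
    rw [cL, Real.sqrt_div Real.pi_pos.le]
    have hs : 0 < Real.sqrt cA := Real.sqrt_pos.mpr hA
    have hp : 0 < Real.sqrt Real.pi := Real.sqrt_pos.mpr Real.pi_pos
    have hpi := Real.pi_pos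
    field_simp
    rw [cA]; ring
  rw [e1] at t3
  refine t3.congr' ?_
  filter_upwards [eventually_gt_atTop 0] with n hn
  have hn' : (0:ℝ) < n := by exact_mod_cast hn
  set τ := Real.sqrt (Real.sqrt (cA / n)) with hτ
  have hτ0 : 0 < τ := by rw [hτ]; positivity
  have hτ2 : τ^2 = Real.sqrt (cA / n) := by rw [hτ, Real.sq_sqrt (by positivity)]
  have hτ4 : τ^4 = cA / n := by
    rw [show τ^4 = (τ^2)^2 by ring, hτ2, Real.sq_sqrt (by positivity)]
  have hm := main_identity hτ0 n (by rw [hτ4]; field_simp)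
  simp only [Function.comp]
  rw [← hτ, ← hm, Complex.ofReal_re]
  have hsA : 0 < Real.sqrt cA := Real.sqrt_pos.mpr hA
  have hsn : 0 < Real.sqrt n := Real.sqrt_pos.mpr hn'
  have hsA2 : Real.sqrt cA ^ 2 = cA := Real.sq_sqrt hA.le
  have hsn2 : Real.sqrt n ^ 2 = n := Real.sq_sqrt hn'.le
  rw [Real.sqrt_div hA.le] at hτ2
  have e6 : τ^6 = cA / n * (Real.sqrt cA / Real.sqrt n) := by rw [← hτ4, ← hτ2]; ring
  have ee : 2 * cA / τ^2 = c * Real.sqrt n := by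
    rw [hτ2, hcc]; field_simp; rw [hsA2]
  have en : (n:ℝ)^((3:ℝ)/2) = n * Real.sqrt n := by
    rw [show (3:ℝ)/2 = 1 + 1/2 by norm_num, Real.rpow_add hn', Real.rpow_one, Real.sqrt_eq_rpow]
  rw [ee, e6, en]
  have := Real.exp_pos (c * Real.sqrt n)
  field_simp
  ring
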